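/- arXiv:1004.0723 — 2 statements merged into one kernel-verified Lean document; each statement's English description precedes it below -/
import Mathlib

section
/- Let {T₁(s)}_{s≥0} and {T₂(s)}_{s≥0} be two strongly continuous one-parameter semigroups of contractions on a complex Hilbert space H such that T₁(s)T₂(t) = T₂(t)T₁(s) for all s,t ≥ 0. Then there exist a complex Hilbert space K containing H (via an isometric embedding) and two strongly continuous one-parameter semigroups of isometries {V₁(s)}_{s≥0} and {V₂(s)}_{s≥0} on K with V₁(s)V₂(t) = V₂(t)V₁(s) for all s,t ≥ 0, such that for all s,t ≥ 0, T₁(s)T₂(t) = P_H V₁(s)V₂(t)|_H, where P_H denotes the orthogonal projection of K onto H. Moreover K, {V₁(s)}, {V₂(s)} can be chosen minimal in the sense that K is the closed linear span of {V₁(s)V₂(t)h : s,t ≥ 0, h ∈ H}. -/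
open ContinuousLinearMap

/-!
Restricted to a grid of mesh `1 / n`, the pair of semigroups is generated by two commuting
contractions `T₁`, `T₂`, and Ando's theorem dilates these to commuting isometries. With
`‖c₁ h‖² = ‖h‖² - ‖T₁ h‖²` and `‖c₂ h‖² = ‖h‖² - ‖T₂ h‖²`, both `(c₁ T₂ h, c₂ h)` and
`(c₁ h, c₂ T₁ h)` have squared norm `‖h‖² - ‖T₁ T₂ h‖²`, so a unitary `G` matches them; twisting
two shifts on `H ⊕ ℓ²` by `G` and `G⁻¹` makes them commute.

Let `n → ∞` along an ultrafilter. The vectors `∑ V_n(⌊p⌋_n) h_p`, for finitely supported families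
`h`, have bounded norms, so their Gram kernels converge and define the space `K`. Rounding down
is not additive, but the error is harmless: if `V` is an isometry dilating `S`, then
`‖V h - h‖² = 2 Re ⟪h, h - S h⟫`, so `V h` is close to `h` as soon as `S h` is. Hence translation
of families acts isometrically in the limit, and the same identity gives strong continuity.
-/

open Filter Topology
open scoped InnerProductSpace NNReal

universe u

section HilbertSpaces

variable {𝕜 : Type*} [RCLike 𝕜]

theorem exists_hilbertSpace_of_core {X : Type u} [AddCommGroup X] [Module 𝕜 X]
    (c : PreInnerProductSpace.Core 𝕜 X) :
    ∃ (K : Type u) (_ : NormedAddCommGroup K) (_ : InnerProductSpace 𝕜 K) (_ : CompleteSpace K)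
      (e : X →ₗ[𝕜] K), DenseRange e ∧ ∀ x y, ⟪e x, e y⟫_𝕜 = c.inner x y := by
  let _ : SeminormedAddCommGroup X := InnerProductSpace.Core.toSeminormedAddCommGroup (c := c)
  let _ : InnerProductSpace 𝕜 X := InnerProductSpace.ofCore c
  exact ⟨UniformSpace.Completion X, inferInstance, inferInstance, inferInstance,
    (UniformSpace.Completion.toComplₗᵢ : X →ₗᵢ[𝕜] UniformSpace.Completion X).toLinearMap,
    UniformSpace.Completion.denseRange_coe, fun x y => UniformSpace.Completion.inner_coe x y⟩

theorem exists_defect {H : Type u} [NormedAddCommGroup H] [InnerProductSpace 𝕜 H] {F : Type*}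
    [NormedAddCommGroup F] [InnerProductSpace 𝕜 F] (T : H →ₗ[𝕜] F) (hT : ∀ h, ‖T h‖ ≤ ‖h‖) :
    ∃ (D : Type u) (_ : NormedAddCommGroup D) (_ : InnerProductSpace 𝕜 D) (_ : CompleteSpace D)
      (c : H →ₗ[𝕜] D), ∀ h, ‖c h‖ ^ 2 + ‖T h‖ ^ 2 = ‖h‖ ^ 2 := by
  let core : PreInnerProductSpace.Core 𝕜 H :=
    { inner := fun x y => ⟪x, y⟫_𝕜 - ⟪T x, T y⟫_𝕜
      conj_inner_symm := fun x y => by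
        rw [map_sub, inner_conj_symm, inner_conj_symm]
      re_inner_nonneg := fun x => by
        rw [map_sub, inner_self_eq_norm_sq, inner_self_eq_norm_sq, sub_nonneg]
        exact pow_le_pow_left₀ (norm_nonneg _) (hT x) 2
      add_left := fun x y z => by
        simp only [map_add, inner_add_left]
        ring
      smul_left := fun x y r => by
        simp only [map_smul, inner_smul_left]
        ring }
  obtain ⟨D, _, _, _, c, -, hc⟩ := exists_hilbertSpace_of_core core
  refine ⟨D, inferInstance, inferInstance, inferInstance, c, fun h => ?_⟩
  rw [← inner_self_eq_norm_sq (𝕜 := 𝕜) (c h), hc]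
  change RCLike.re (⟪h, h⟫_𝕜 - ⟪T h, T h⟫_𝕜) + _ = _
  rw [map_sub, inner_self_eq_norm_sq, inner_self_eq_norm_sq, sub_add_cancel]

end HilbertSpaces

noncomputable section UnitaryExtension

variable {𝕜 : Type*} [RCLike 𝕜]

/-- The isometric rearrangement `(a, b), (c, d) ↦ (a, d), (c, b)` of an `ℓ²` sum. -/
def prodSwapSnd (α β γ δ : Type*) [NormedAddCommGroup α] [InnerProductSpace 𝕜 α]
    [NormedAddCommGroup β] [InnerProductSpace 𝕜 β] [NormedAddCommGroup γ] [InnerProductSpace 𝕜 γ]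
    [NormedAddCommGroup δ] [InnerProductSpace 𝕜 δ] :
    WithLp 2 (WithLp 2 (α × β) × WithLp 2 (γ × δ)) ≃ₗᵢ[𝕜]
      WithLp 2 (WithLp 2 (α × δ) × WithLp 2 (γ × β)) where
  toFun x := .toLp 2 (.toLp 2 (x.fst.fst, x.snd.snd), .toLp 2 (x.snd.fst, x.fst.snd))
  invFun x := .toLp 2 (.toLp 2 (x.fst.fst, x.snd.snd), .toLp 2 (x.snd.fst, x.fst.snd))
  map_add' _ _ := rfl
  map_smul' _ _ := rfl
  left_inv _ := rfl
  right_inv _ := rfl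
  norm_map' x := by
    rw [← sq_eq_sq₀ (norm_nonneg _) (norm_nonneg _)]
    simp only [WithLp.prod_norm_sq_eq_of_L2]
    change ‖x.fst.fst‖ ^ 2 + ‖x.snd.snd‖ ^ 2 + (‖x.snd.fst‖ ^ 2 + ‖x.fst.snd‖ ^ 2) = _
    ring

theorem prodSwapSnd_apply {α β γ δ : Type*} [NormedAddCommGroup α] [InnerProductSpace 𝕜 α]
    [NormedAddCommGroup β] [InnerProductSpace 𝕜 β] [NormedAddCommGroup γ] [InnerProductSpace 𝕜 γ]
    [NormedAddCommGroup δ] [InnerProductSpace 𝕜 δ]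
    (x : WithLp 2 (WithLp 2 (α × β) × WithLp 2 (γ × δ))) :
    prodSwapSnd (𝕜 := 𝕜) α β γ δ x =
      .toLp 2 (.toLp 2 (x.fst.fst, x.snd.snd), .toLp 2 (x.snd.fst, x.fst.snd)) :=
  rfl

variable {X E : Type*} [AddCommGroup X] [Module 𝕜 X]
  [NormedAddCommGroup E] [InnerProductSpace 𝕜 E] [CompleteSpace E]

theorem exists_closure_range_equiv (A B : X →ₗ[𝕜] E) (hAB : ∀ x, ‖A x‖ = ‖B x‖) :
    ∃ (M N : Submodule 𝕜 E) (_ : CompleteSpace M) (_ : CompleteSpace N) (w : M ≃ₗᵢ[𝕜] N)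
      (a : X →ₗ[𝕜] M), ∀ x, (a x : E) = A x ∧ (w (a x) : E) = B x := by
  have hcomplete (C : X →ₗ[𝕜] E) : CompleteSpace (LinearMap.range C).topologicalClosure :=
    (Submodule.isClosed_topologicalClosure _).completeSpace_coe
  let toClosure (C : X →ₗ[𝕜] E) : X →ₗ[𝕜] (LinearMap.range C).topologicalClosure :=
    C.codRestrict _ fun x => Submodule.le_topologicalClosure _ ⟨x, rfl⟩
  have hdense (C : X →ₗ[𝕜] E) : DenseRange (toClosure C) := by
    rw [DenseRange, Subtype.dense_iff]
    intro y hy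
    refine closure_mono ?_ hy
    rintro _ ⟨x, rfl⟩
    exact ⟨toClosure C x, ⟨x, rfl⟩, rfl⟩
  let w := (LinearEquiv.refl 𝕜 X).extendOfIsometry (toClosure A) (toClosure B) (hdense A)
    (hdense B) fun x => (hAB x).symm
  refine ⟨_, _, hcomplete A, hcomplete B, w, toClosure A, fun x => ⟨rfl, ?_⟩⟩
  exact congrArg Subtype.val (LinearEquiv.extendOfIsometry_eq ..)

theorem exists_unitary_of_norm_eq (A B : X →ₗ[𝕜] E) (hAB : ∀ x, ‖A x‖ = ‖B x‖) :
    ∃ G : WithLp 2 (E × E) ≃ₗᵢ[𝕜] WithLp 2 (E × E),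
      ∀ x, G (.toLp 2 (A x, 0)) = .toLp 2 (B x, 0) := by
  obtain ⟨M, N, _, _, w, a, hw⟩ := exists_closure_range_equiv A B hAB
  -- `Mᗮ` and `Nᗮ` need not be isomorphic, so `w : M ≃ N` may have no unitary extension to `E`;
  -- in `E × E` each of them occurs both before and after the exchange `w × w⁻¹`.
  let split : WithLp 2 (E × E) ≃ₗᵢ[𝕜] WithLp 2 (WithLp 2 (M × Mᗮ) × WithLp 2 (N × Nᗮ)) :=
    .withLpProdCongr 2 M.orthogonalDecomposition N.orthogonalDecomposition
  let exchange : WithLp 2 (WithLp 2 (M × Mᗮ) × WithLp 2 (N × Nᗮ)) ≃ₗᵢ[𝕜]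
      WithLp 2 (WithLp 2 (N × Mᗮ) × WithLp 2 (M × Nᗮ)) :=
    .withLpProdCongr 2 (.withLpProdCongr 2 w (.refl 𝕜 _)) (.withLpProdCongr 2 w.symm (.refl 𝕜 _))
  let join : WithLp 2 (WithLp 2 (N × Nᗮ) × WithLp 2 (M × Mᗮ)) ≃ₗᵢ[𝕜] WithLp 2 (E × E) :=
    .withLpProdCongr 2 N.orthogonalDecomposition.symm M.orthogonalDecomposition.symm
  refine ⟨((split.trans exchange).trans (prodSwapSnd ..)).trans join, fun x => ?_⟩
  rw [← (hw x).1, ← (hw x).2]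
  simp [split, exchange, join, prodSwapSnd_apply,
    Submodule.orthogonalProjectionOnto_orthogonal_apply_eq_zero]

end UnitaryExtension

noncomputable section Shift

variable {𝕜 H A B L : Type*} [RCLike 𝕜]
  [NormedAddCommGroup H] [InnerProductSpace 𝕜 H] [NormedAddCommGroup A] [InnerProductSpace 𝕜 A]
  [NormedAddCommGroup B] [InnerProductSpace 𝕜 B] [NormedAddCommGroup L] [InnerProductSpace 𝕜 L]

/-- The space `H ⊕ ℓ²(ℕ, L)` carrying the dilation, with `H` as first summand. -/
abbrev DilationSpace (H L : Type*) [NormedAddCommGroup H] [NormedAddCommGroup L] : Type _ :=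
  WithLp 2 (H × lp (fun _ : ℕ => L) 2)

theorem dilationSpace_ext {x y : DilationSpace H L} (hfst : x.fst = y.fst)
    (hsnd : ∀ n, x.snd n = y.snd n) : x = y :=
  WithLp.ofLp_injective 2 (Prod.ext hfst (lp.ext (funext hsnd)))

/-- The sequence component of the shift of `k`: slots of `L` are unpacked by `e` into an
`A`-part, which moves one place to the right, and a `B`-part, which stays; `c` fills the vacant
`A`-part, and `d` packs the parts back into `L`. -/
def shiftSeq (c : H →ₗ[𝕜] A) (e : L →ₗᵢ[𝕜] WithLp 2 (A × B)) (d : WithLp 2 (A × B) →ₗᵢ[𝕜] L)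
    (k : DilationSpace H L) : ℕ → L
  | 0 => d (.toLp 2 (c k.fst, (e (k.snd 0)).snd))
  | n + 1 => d (.toLp 2 ((e (k.snd n)).fst, (e (k.snd (n + 1))).snd))

theorem hasSum_norm_sq (f : lp (fun _ : ℕ => L) 2) : HasSum (fun n => ‖f n‖ ^ 2) (‖f‖ ^ 2) := by
  simpa using lp.hasSum_norm (p := 2) (by norm_num) f

theorem hasSum_norm_sq_shiftSeq (c : H →ₗ[𝕜] A) (e : L →ₗᵢ[𝕜] WithLp 2 (A × B))
    (d : WithLp 2 (A × B) →ₗᵢ[𝕜] L) (k : DilationSpace H L) :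
    HasSum (fun n => ‖shiftSeq c e d k n‖ ^ 2) (‖c k.fst‖ ^ 2 + ‖k.snd‖ ^ 2) := by
  have hsum := hasSum_norm_sq k.snd
  have hsplit (n : ℕ) :
      ‖(e (k.snd n)).fst‖ ^ 2 + ‖(e (k.snd n)).snd‖ ^ 2 = ‖k.snd n‖ ^ 2 := by
    rw [← WithLp.prod_norm_sq_eq_of_L2, e.norm_map]
  have hA : Summable fun n => ‖(e (k.snd n)).fst‖ ^ 2 :=
    hsum.summable.of_nonneg_of_le (fun n => sq_nonneg _) fun n => by
      rw [← hsplit]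
      exact le_add_of_nonneg_right (sq_nonneg _)
  have hB : HasSum (fun n => ‖(e (k.snd n)).snd‖ ^ 2)
      (‖k.snd‖ ^ 2 - ∑' n, ‖(e (k.snd n)).fst‖ ^ 2) := by
    simpa only [← hsplit, add_sub_cancel_left] using hsum.sub hA.hasSum
  let movedA : ℕ → ℝ
    | 0 => ‖c k.fst‖ ^ 2
    | n + 1 => ‖(e (k.snd n)).fst‖ ^ 2
  have hmoved : HasSum movedA (∑' n, ‖(e (k.snd n)).fst‖ ^ 2 + ‖c k.fst‖ ^ 2) := by
    simpa using (hasSum_nat_add_iff (f := movedA) 1).1 hA.hasSum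
  convert hmoved.add hB using 1
  · ext n
    cases n <;> simp [shiftSeq, WithLp.prod_norm_sq_eq_of_L2, movedA]
  · ring

/-- The shifted sequence `shiftSeq` as a linear map into `ℓ²(ℕ, L)`. -/
def shiftLp (c : H →ₗ[𝕜] A) (e : L →ₗᵢ[𝕜] WithLp 2 (A × B)) (d : WithLp 2 (A × B) →ₗᵢ[𝕜] L) :
    DilationSpace H L →ₗ[𝕜] lp (fun _ : ℕ => L) 2 where
  toFun k := ⟨shiftSeq c e d k, memℓp_gen (by
    simpa using (hasSum_norm_sq_shiftSeq c e d k).summable)⟩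
  map_add' k k' := lp.ext <| funext fun n => by
    change _ = shiftSeq c e d k n + shiftSeq c e d k' n
    cases n <;> simp [shiftSeq, ← map_add d, ← WithLp.toLp_add]
  map_smul' r k := lp.ext <| funext fun n => by
    cases n <;> simp [shiftSeq, ← map_smul d, ← WithLp.toLp_smul]

theorem norm_sq_shiftLp (c : H →ₗ[𝕜] A) (e : L →ₗᵢ[𝕜] WithLp 2 (A × B))
    (d : WithLp 2 (A × B) →ₗᵢ[𝕜] L) (k : DilationSpace H L) :
    ‖shiftLp c e d k‖ ^ 2 = ‖c k.fst‖ ^ 2 + ‖k.snd‖ ^ 2 :=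
  (hasSum_norm_sq _).unique (hasSum_norm_sq_shiftSeq c e d k)

/-- The isometric shift on `H ⊕ ℓ²(ℕ, L)` lifting the contraction `T`, whose defect
`‖h‖² - ‖T h‖²` is recorded by `c`. -/
def shift (T : H →ₗ[𝕜] H) (c : H →ₗ[𝕜] A) (hc : ∀ h, ‖c h‖ ^ 2 + ‖T h‖ ^ 2 = ‖h‖ ^ 2)
    (e : L →ₗᵢ[𝕜] WithLp 2 (A × B)) (d : WithLp 2 (A × B) →ₗᵢ[𝕜] L) :
    DilationSpace H L →ₗᵢ[𝕜] DilationSpace H L where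
  toFun k := .toLp 2 (T k.fst, shiftLp c e d k)
  map_add' k k' := dilationSpace_ext (by simp) fun n => by simp
  map_smul' r k := dilationSpace_ext (by simp) fun n => by simp
  norm_map' k := by
    rw [← sq_eq_sq₀ (norm_nonneg _) (norm_nonneg _), WithLp.prod_norm_sq_eq_of_L2 k, ← hc,
      WithLp.prod_norm_sq_eq_of_L2]
    change ‖T k.fst‖ ^ 2 + ‖shiftLp c e d k‖ ^ 2 = _
    rw [norm_sq_shiftLp]
    ring

theorem exists_commuting_lifts_of_unitary {T₁ T₂ : H →ₗ[𝕜] H} (hT : ∀ h, T₁ (T₂ h) = T₂ (T₁ h))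
    (c₁ : H →ₗ[𝕜] A) (c₂ : H →ₗ[𝕜] B)
    (hc₁ : ∀ h, ‖c₁ h‖ ^ 2 + ‖T₁ h‖ ^ 2 = ‖h‖ ^ 2) (hc₂ : ∀ h, ‖c₂ h‖ ^ 2 + ‖T₂ h‖ ^ 2 = ‖h‖ ^ 2)
    (G : WithLp 2 (A × B) ≃ₗᵢ[𝕜] WithLp 2 (A × B))
    (hG : ∀ h, G (.toLp 2 (c₁ (T₂ h), c₂ h)) = .toLp 2 (c₁ h, c₂ (T₁ h))) :
    ∃ V₁ V₂ : DilationSpace H (WithLp 2 (A × B)) →ₗᵢ[𝕜] DilationSpace H (WithLp 2 (A × B)),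
      (∀ k, V₁ (V₂ k) = V₂ (V₁ k)) ∧ (∀ k, (V₁ k).fst = T₁ k.fst) ∧
        ∀ k, (V₂ k).fst = T₂ k.fst := by
  let comm : WithLp 2 (A × B) ≃ₗᵢ[𝕜] WithLp 2 (B × A) := .withLpProdComm 2 𝕜 A B
  refine ⟨shift T₁ c₁ hc₁ .id G.toLinearIsometry,
    shift T₂ c₂ hc₂ (G.symm.trans comm).toLinearIsometry comm.symm.toLinearIsometry,
    fun k => dilationSpace_ext (hT _) fun n => ?_, fun _ => rfl, fun _ => rfl⟩
  have heta (x : WithLp 2 (A × B)) : WithLp.toLp 2 (x.fst, x.snd) = x := rfl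
  rcases n with _ | _ | n <;> simp [shift, shiftLp, shiftSeq, comm, hG, heta]

theorem exists_ando_lifts {H : Type u} [NormedAddCommGroup H] [InnerProductSpace 𝕜 H]
    {T₁ T₂ : H →ₗ[𝕜] H} (hT₁ : ∀ h, ‖T₁ h‖ ≤ ‖h‖) (hT₂ : ∀ h, ‖T₂ h‖ ≤ ‖h‖)
    (hT : ∀ h, T₁ (T₂ h) = T₂ (T₁ h)) :
    ∃ (L : Type u) (_ : NormedAddCommGroup L) (_ : InnerProductSpace 𝕜 L)
      (V₁ V₂ : DilationSpace H L →ₗᵢ[𝕜] DilationSpace H L),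
      (∀ k, V₁ (V₂ k) = V₂ (V₁ k)) ∧ (∀ k, (V₁ k).fst = T₁ k.fst) ∧
        ∀ k, (V₂ k).fst = T₂ k.fst := by
  obtain ⟨D₁, _, _, _, c₁, hc₁⟩ := exists_defect T₁ hT₁
  obtain ⟨D₂, _, _, _, c₂, hc₂⟩ := exists_defect T₂ hT₂
  let toProd := (WithLp.linearEquiv 2 𝕜 (D₁ × D₂)).symm.toLinearMap
  have hnorm (h : H) : ‖toProd ((c₁ ∘ₗ T₂).prod c₂ h)‖ = ‖toProd (c₁.prod (c₂ ∘ₗ T₁) h)‖ := by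
    rw [← sq_eq_sq₀ (norm_nonneg _) (norm_nonneg _), WithLp.prod_norm_sq_eq_of_L2,
      WithLp.prod_norm_sq_eq_of_L2]
    change ‖c₁ (T₂ h)‖ ^ 2 + ‖c₂ h‖ ^ 2 = ‖c₁ h‖ ^ 2 + ‖c₂ (T₁ h)‖ ^ 2
    linarith [hc₁ h, hc₂ h, hc₁ (T₂ h), hc₂ (T₁ h), congrArg (‖·‖ ^ 2) (hT h)]
  obtain ⟨G, hG⟩ := exists_unitary_of_norm_eq (toProd ∘ₗ (c₁ ∘ₗ T₂).prod c₂)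
    (toProd ∘ₗ c₁.prod (c₂ ∘ₗ T₁)) hnorm
  let E := WithLp 2 (D₁ × D₂)
  let assoc : WithLp 2 (E × E) ≃ₗᵢ[𝕜] WithLp 2 (D₁ × WithLp 2 (D₂ × E)) :=
    .withLpProdAssoc 2 𝕜 D₁ D₂ E
  let c₂' : H →ₗ[𝕜] WithLp 2 (D₂ × E) :=
    (WithLp.linearEquiv 2 𝕜 (D₂ × E)).symm.toLinearMap ∘ₗ c₂.prod 0
  have hc₂' (h : H) : ‖c₂' h‖ ^ 2 + ‖T₂ h‖ ^ 2 = ‖h‖ ^ 2 := by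
    rw [← hc₂ h, WithLp.prod_norm_sq_eq_of_L2]
    simp [c₂']
  have hG' (h : H) : ((assoc.symm.trans G).trans assoc) (.toLp 2 (c₁ (T₂ h), c₂' h)) =
      .toLp 2 (c₁ h, c₂' (T₁ h)) := congrArg assoc (hG h)
  exact ⟨WithLp 2 (D₁ × WithLp 2 (D₂ × E)), inferInstance, inferInstance,
    exists_commuting_lifts_of_unitary hT c₁ c₂' hc₁ hc₂' _ hG'⟩

end Shift

noncomputable section Dilation

variable {𝕜 : Type*} [RCLike 𝕜]

/-- A strongly continuous semigroup of contractions on `H` indexed by a topological additive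
monoid `M`, for instance `ℝ≥0 × ℝ≥0` for a pair of commuting one-parameter semigroups. -/
structure IsContractionSemigroup {M H : Type*} [AddMonoid M] [TopologicalSpace M]
    [NormedAddCommGroup H] [InnerProductSpace 𝕜 H] (S : M → H →L[𝕜] H) : Prop where
  protected map_zero : S 0 = 1
  protected map_add : ∀ p q, S (p + q) = S p * S q
  norm_le_one : ∀ p, ‖S p‖ ≤ 1
  continuous_apply : ∀ x, Continuous fun p => S p x

/-- The isometries `V p` form a semigroup on `K` whose compression to `H`, embedded in `K` by `ι`,
is `S`. The compression `P_H V p|_H = S p` is expressed by inner products, without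
adjoints or projections. -/
structure IsIsometricDilation {M H K : Type*} [AddMonoid M] [NormedAddCommGroup H]
    [InnerProductSpace 𝕜 H] [NormedAddCommGroup K] [InnerProductSpace 𝕜 K] (S : M → H →L[𝕜] H)
    (ι : H →ₗᵢ[𝕜] K) (V : M → K →ₗᵢ[𝕜] K) : Prop where
  protected map_zero : V 0 = 1
  protected map_add : ∀ p q, V (p + q) = V p * V q
  inner_map : ∀ p h h', ⟪ι h', V p (ι h)⟫_𝕜 = ⟪h', S p h⟫_𝕜

theorem IsContractionSemigroup.norm_apply_le {M H : Type*} [AddMonoid M] [TopologicalSpace M]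
    [NormedAddCommGroup H] [InnerProductSpace 𝕜 H] {S : M → H →L[𝕜] H}
    (hS : IsContractionSemigroup S) (p : M) (h : H) : ‖S p h‖ ≤ ‖h‖ := by
  simpa using (S p).le_of_opNorm_le (hS.norm_le_one p) h

theorem exists_isometricDilation_nat_prod {H : Type u} [NormedAddCommGroup H]
    [InnerProductSpace 𝕜 H] {S : ℕ × ℕ → H →L[𝕜] H} (hS : IsContractionSemigroup S) :
    ∃ (K : Type u) (_ : NormedAddCommGroup K) (_ : InnerProductSpace 𝕜 K) (ι : H →ₗᵢ[𝕜] K)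
      (V : ℕ × ℕ → K →ₗᵢ[𝕜] K), IsIsometricDilation S ι V := by
  have hadd (p q : ℕ × ℕ) (h : H) : S (p + q) h = S p (S q h) := by
    rw [hS.map_add, mul_apply_eq_comp]
  obtain ⟨L, _, _, V₁, V₂, hcomm, hV₁, hV₂⟩ := exists_ando_lifts
    (T₁ := (S (1, 0)).toLinearMap) (T₂ := (S (0, 1)).toLinearMap)
    (hS.norm_apply_le _) (hS.norm_apply_le _)
    fun h => by simp only [coe_coe, ← hadd, add_comm]
  have hcommute : Commute V₁ V₂ := LinearIsometry.ext hcomm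
  have hpow {U : DilationSpace H L →ₗᵢ[𝕜] DilationSpace H L} {p : ℕ × ℕ}
      (hU : ∀ k, (U k).fst = S p k.fst) (a : ℕ) (k : DilationSpace H L) :
      ((U ^ a) k).fst = S (a • p) k.fst := by
    induction a with
    | zero => simp [hS.map_zero]
    | succ a ih =>
      rw [pow_succ', succ_nsmul', hadd, ← ih]
      exact hU _
  let ι : H →ₗᵢ[𝕜] DilationSpace H L :=
    { toLinearMap := (WithLp.linearEquiv 2 𝕜 _).symm.toLinearMap ∘ₗ LinearMap.inl 𝕜 H _
      norm_map' := fun h => by simp }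
  refine ⟨DilationSpace H L, inferInstance, inferInstance, ι, fun p => V₁ ^ p.1 * V₂ ^ p.2,
    by simp, fun p q => ?_, fun p h h' => ?_⟩
  · rw [Prod.fst_add, Prod.snd_add, pow_add, pow_add]
    exact (hcommute.pow_pow q.1 p.2).mul_mul_mul_comm _ _
  · have hfst : ((V₁ ^ p.1 * V₂ ^ p.2) (ι h)).fst = S p h := by
      change ((V₁ ^ p.1) ((V₂ ^ p.2) (ι h))).fst = _
      rw [hpow hV₁, hpow hV₂, ← hadd]
      simp [ι]
    rw [← hfst, WithLp.prod_inner_apply]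
    simp [ι]

end Dilation

section Limit

variable {𝕜 : Type*} [RCLike 𝕜] {α : Type*} {𝒦 : α → Type*} [∀ i, NormedAddCommGroup (𝒦 i)]
  [∀ i, InnerProductSpace 𝕜 (𝒦 i)]

theorem exists_hilbertSpace_of_bounded {X : Type u} [AddCommGroup X] [Module 𝕜 X]
    (l : Ultrafilter α) (Φ : ∀ i, X →ₗ[𝕜] 𝒦 i) (hΦ : ∀ x, ∃ C, ∀ i, ‖Φ i x‖ ≤ C) :
    ∃ (K : Type u) (_ : NormedAddCommGroup K) (_ : InnerProductSpace 𝕜 K) (_ : CompleteSpace K)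
      (e : X →ₗ[𝕜] K), DenseRange e ∧
        ∀ x y, Tendsto (fun i => ⟪Φ i x, Φ i y⟫_𝕜) l (𝓝 ⟪e x, e y⟫_𝕜) := by
  have hlim (x y : X) : ∃ z, Tendsto (fun i => ⟪Φ i x, Φ i y⟫_𝕜) l (𝓝 z) := by
    obtain ⟨C, hC⟩ := hΦ x
    obtain ⟨D, hD⟩ := hΦ y
    have hmem (i : α) : ⟪Φ i x, Φ i y⟫_𝕜 ∈ Metric.closedBall (0 : 𝕜) (C * D) := by
      rw [mem_closedBall_zero_iff]
      exact (norm_inner_le_norm _ _).trans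
        (mul_le_mul (hC i) (hD i) (norm_nonneg _) ((norm_nonneg _).trans (hC i)))
    obtain ⟨z, -, hz⟩ := (isCompact_closedBall (0 : 𝕜) (C * D)).ultrafilter_le_nhds
      (l.map fun i => ⟪Φ i x, Φ i y⟫_𝕜) (le_principal_iff.2 (mem_map.2 (Eventually.of_forall hmem)))
    exact ⟨z, hz⟩
  choose B hB using hlim
  let core : PreInnerProductSpace.Core 𝕜 X :=
    { inner := B
      conj_inner_symm := fun x y => tendsto_nhds_unique
        (((RCLike.continuous_conj.tendsto _).comp (hB y x)).congr fun _ => inner_conj_symm _ _)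
        (hB x y)
      re_inner_nonneg := fun x => ge_of_tendsto' ((RCLike.continuous_re.tendsto _).comp (hB x x))
        fun _ => inner_self_nonneg
      add_left := fun x y z => tendsto_nhds_unique (hB (x + y) z)
        (((hB x z).add (hB y z)).congr fun _ => by rw [map_add, inner_add_left])
      smul_left := fun x y r => tendsto_nhds_unique (hB (r • x) y)
        (((hB x y).const_mul _).congr fun _ => by rw [map_smul, inner_smul_left]) }
  obtain ⟨K, _, _, _, e, hdense, he⟩ := exists_hilbertSpace_of_core core
  exact ⟨K, inferInstance, inferInstance, inferInstance, e, hdense, fun x y =>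
    (he x y).symm ▸ hB x y⟩

theorem tendsto_norm_of_tendsto_inner_self {K : Type*} [NormedAddCommGroup K]
    [InnerProductSpace 𝕜 K] {l : Filter α} {x : ∀ i, 𝒦 i} {y : K}
    (h : Tendsto (fun i => ⟪x i, x i⟫_𝕜) l (𝓝 ⟪y, y⟫_𝕜)) :
    Tendsto (fun i => ‖x i‖) l (𝓝 ‖y‖) := by
  simpa only [norm_eq_sqrt_re_inner (𝕜 := 𝕜), Function.comp_apply] using
    ((RCLike.continuous_re.tendsto _).comp h).sqrt

end Limit

noncomputable section Orbit

variable {𝕜 M H K : Type*} [RCLike 𝕜] [NormedAddCommGroup H] [InnerProductSpace 𝕜 H]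
  [NormedAddCommGroup K] [InnerProductSpace 𝕜 K]

/-- The map `∑ δ_p ⊗ h_p ↦ ∑ V p (ι h_p)` of finitely supported functions; a dilation is minimal
when this map has dense range. -/
def orbitMap (ι : H →ₗᵢ[𝕜] K) (V : M → K →ₗᵢ[𝕜] K) : (M →₀ H) →ₗ[𝕜] K :=
  Finsupp.lsum 𝕜 fun p => (V p).toLinearMap ∘ₗ ι.toLinearMap

@[simp]
theorem orbitMap_single (ι : H →ₗᵢ[𝕜] K) (V : M → K →ₗᵢ[𝕜] K) (p : M) (h : H) :
    orbitMap ι V (.single p h) = V p (ι h) := by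
  simp [orbitMap]

theorem norm_orbitMap_le (ι : H →ₗᵢ[𝕜] K) (V : M → K →ₗᵢ[𝕜] K) (x : M →₀ H) :
    ‖orbitMap ι V x‖ ≤ x.sum fun _ h => ‖h‖ := by
  rw [orbitMap, Finsupp.lsum_apply]
  exact (norm_sum_le _ _).trans_eq (Finset.sum_congr rfl fun p _ => by simp)

variable [AddMonoid M]

variable (𝕜 H) in
/-- Translation by `p` of finitely supported functions, `δ_q ⊗ h ↦ δ_{p+q} ⊗ h`. -/
def leftTranslate (p : M) : (M →₀ H) →ₗ[𝕜] (M →₀ H) :=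
  Finsupp.lmapDomain H 𝕜 (p + ·)

@[simp]
theorem leftTranslate_single (p q : M) (h : H) :
    leftTranslate 𝕜 H p (.single q h) = .single (p + q) h := by
  simp [leftTranslate]

theorem leftTranslate_zero : leftTranslate 𝕜 H (0 : M) = .id :=
  Finsupp.lhom_ext fun _ _ => by simp

theorem leftTranslate_add (p q : M) :
    leftTranslate 𝕜 H (p + q) = leftTranslate 𝕜 H p ∘ₗ leftTranslate 𝕜 H q :=
  Finsupp.lhom_ext fun _ _ => by simp [add_assoc]

theorem exists_isometry_of_norm_eq {X : Type*} [AddCommGroup X] [Module 𝕜 X] [CompleteSpace K]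
    {e : X →ₗ[𝕜] K} (he : DenseRange e) (f : X →ₗ[𝕜] K) (hf : ∀ x, ‖f x‖ = ‖e x‖) :
    ∃ V : K →ₗᵢ[𝕜] K, ∀ x, V (e x) = f x := by
  have heq (x : X) : f.extendOfNorm e (e x) = f x :=
    LinearMap.extendOfNorm_eq (f := f) he ⟨1, fun x => by rw [hf, one_mul]⟩ x
  refine ⟨⟨(f.extendOfNorm e).toLinearMap, fun k => ?_⟩, heq⟩
  refine he.induction_on (p := fun k => ‖f.extendOfNorm e k‖ = ‖k‖) k
    (isClosed_eq (by fun_prop) (by fun_prop)) fun x => ?_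
  rw [heq, hf]

theorem exists_isometry_semigroup_of_norm_leftTranslate [CompleteSpace K] {e : (M →₀ H) →ₗ[𝕜] K}
    (he : DenseRange e) (hnorm : ∀ p x, ‖e (leftTranslate 𝕜 H p x)‖ = ‖e x‖) :
    ∃ V : M → K →ₗᵢ[𝕜] K, V 0 = 1 ∧ (∀ p q, V (p + q) = V p * V q) ∧
      ∀ p x, V p (e x) = e (leftTranslate 𝕜 H p x) := by
  choose V hV using fun p => exists_isometry_of_norm_eq he (e ∘ₗ leftTranslate 𝕜 H p) (hnorm p)
  have hext {U U' : K →ₗᵢ[𝕜] K} (h : ∀ x, U (e x) = U' (e x)) : U = U' :=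
    LinearIsometry.ext <| congrFun <| he.equalizer U.continuous U'.continuous (funext h)
  refine ⟨V, hext fun x => ?_, fun p q => hext fun x => ?_, hV⟩
  · simp [hV, leftTranslate_zero]
  · change _ = V p (V q (e x))
    simp [hV, leftTranslate_add]

end Orbit

noncomputable section UltrafilterLimit

universe v

variable {𝕜 : Type*} [RCLike 𝕜] {α : Type*} {l : Filter α} {𝒦 : α → Type*}
  [∀ i, NormedAddCommGroup (𝒦 i)] [∀ i, InnerProductSpace 𝕜 (𝒦 i)]
  {M : Type v} [AddMonoid M] {H : Type u} [NormedAddCommGroup H] [InnerProductSpace 𝕜 H]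
  {ι : ∀ i, H →ₗᵢ[𝕜] 𝒦 i} {W : ∀ i, M → 𝒦 i →ₗᵢ[𝕜] 𝒦 i}

theorem tendsto_norm_orbitMap_leftTranslate_sub
    (hadd : ∀ p q h,
      Tendsto (fun i => ‖W i (p + q) (ι i h) - W i p (W i q (ι i h))‖) l (𝓝 0))
    (p : M) (x : M →₀ H) :
    Tendsto (fun i => ‖orbitMap (ι i) (W i) (leftTranslate 𝕜 H p x) -
      W i p (orbitMap (ι i) (W i) x)‖) l (𝓝 0) := by
  induction x using Finsupp.induction_linear with
  | zero => simpa using tendsto_const_nhds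
  | single q h => simpa using hadd p q h
  | add x y hx hy =>
    refine squeeze_zero (fun _ => norm_nonneg _) (fun i => ?_) (by simpa using hx.add hy)
    simp only [map_add, add_sub_add_comm]
    exact norm_add_le _ _

theorem norm_leftTranslate_eq_of_tendsto [l.NeBot] {K : Type*} [NormedAddCommGroup K]
    [InnerProductSpace 𝕜 K] {e : (M →₀ H) →ₗ[𝕜] K}
    (he : ∀ x, Tendsto (fun i => ‖orbitMap (ι i) (W i) x‖) l (𝓝 ‖e x‖))
    (hadd : ∀ p q h,
      Tendsto (fun i => ‖W i (p + q) (ι i h) - W i p (W i q (ι i h))‖) l (𝓝 0))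
    (p : M) (x : M →₀ H) : ‖e (leftTranslate 𝕜 H p x)‖ = ‖e x‖ := by
  refine sub_eq_zero.1 <| tendsto_nhds_unique ((he (leftTranslate 𝕜 H p x)).sub (he x)) <|
    squeeze_zero_norm (fun i => ?_) (tendsto_norm_orbitMap_leftTranslate_sub hadd p x)
  simpa using abs_norm_sub_norm_le (orbitMap (ι i) (W i) (leftTranslate 𝕜 H p x))
    (W i p (orbitMap (ι i) (W i) x))

theorem exists_minimal_isometricDilation_of_tendsto [l.NeBot] {S : M → H →L[𝕜] H}
    (hzero : ∀ i, W i 0 = 1)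
    (hadd : ∀ p q h,
      Tendsto (fun i => ‖W i (p + q) (ι i h) - W i p (W i q (ι i h))‖) l (𝓝 0))
    (hS : ∀ p h h', Tendsto (fun i => ⟪ι i h', W i p (ι i h)⟫_𝕜) l (𝓝 ⟪h', S p h⟫_𝕜)) :
    ∃ (K : Type max u v) (_ : NormedAddCommGroup K) (_ : InnerProductSpace 𝕜 K)
      (_ : CompleteSpace K) (j : H →ₗᵢ[𝕜] K) (V : M → K →ₗᵢ[𝕜] K),
      IsIsometricDilation S j V ∧ DenseRange (orbitMap j V) := by
  have hle : (Ultrafilter.of l : Filter α) ≤ l := Ultrafilter.of_le l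
  obtain ⟨K, _, _, _, e, hdense, he⟩ := exists_hilbertSpace_of_bounded (Ultrafilter.of l)
    (fun i => orbitMap (ι i) (W i)) fun x => ⟨_, fun i => norm_orbitMap_le (ι i) (W i) x⟩
  have henorm (x : M →₀ H) := tendsto_norm_of_tendsto_inner_self (he x x)
  obtain ⟨V, hV₀, hVadd, hV⟩ := exists_isometry_semigroup_of_norm_leftTranslate hdense
    (norm_leftTranslate_eq_of_tendsto henorm fun p q h => (hadd p q h).mono_left hle)
  let j : H →ₗᵢ[𝕜] K :=
    { toLinearMap := e ∘ₗ Finsupp.lsingle 0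
      norm_map' := fun h => tendsto_nhds_unique (henorm (.single 0 h))
        (tendsto_const_nhds.congr fun i => by simp) }
  have hVj (p : M) (h : H) : V p (j h) = e (.single p h) := by
    change V p (e (.single 0 h)) = _
    rw [hV, leftTranslate_single, add_zero]
  have horbit : orbitMap j V = e := Finsupp.lhom_ext fun p h => by rw [orbitMap_single, hVj]
  refine ⟨K, inferInstance, inferInstance, inferInstance, j, V,
    ⟨hV₀, hVadd, fun p h h' => ?_⟩, horbit ▸ hdense⟩
  rw [hVj]
  refine tendsto_nhds_unique (he (.single 0 h') (.single p h))
    (((hS p h h').mono_left hle).congr fun i => ?_)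
  simp [hzero]

end UltrafilterLimit

namespace IsIsometricDilation

variable {𝕜 M H : Type*} [RCLike 𝕜] [AddMonoid M] [NormedAddCommGroup H] [InnerProductSpace 𝕜 H]

theorem norm_map_sub_le {K : Type*} [NormedAddCommGroup K] [InnerProductSpace 𝕜 K]
    {S : M → H →L[𝕜] H} {ι : H →ₗᵢ[𝕜] K} {V : M → K →ₗᵢ[𝕜] K} (hV : IsIsometricDilation S ι V)
    (p : M) (h : H) : ‖V p (ι h) - ι h‖ ≤ √(2 * (‖h‖ * ‖h - S p h‖)) := by
  refine Real.le_sqrt_of_sq_le ?_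
  calc ‖V p (ι h) - ι h‖ ^ 2 = 2 * RCLike.re ⟪h, h - S p h⟫_𝕜 := by
        rw [norm_sub_rev, norm_sub_sq (𝕜 := 𝕜), hV.inner_map, inner_sub_right, map_sub,
          inner_self_eq_norm_sq, (V p).norm_map, ι.norm_map]
        ring
    _ ≤ 2 * (‖h‖ * ‖h - S p h‖) := by gcongr; exact re_inner_le_norm _ _

theorem tendsto_norm_map_sub {α : Type*} {l : Filter α} {𝒦 : α → Type*}
    [∀ i, NormedAddCommGroup (𝒦 i)] [∀ i, InnerProductSpace 𝕜 (𝒦 i)]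
    {S : α → M → H →L[𝕜] H} {ι : ∀ i, H →ₗᵢ[𝕜] 𝒦 i} {V : ∀ i, M → 𝒦 i →ₗᵢ[𝕜] 𝒦 i}
    (hV : ∀ i, IsIsometricDilation (S i) (ι i) (V i)) {p : α → M} {h : H}
    (hp : Tendsto (fun i => S i (p i) h) l (𝓝 h)) :
    Tendsto (fun i => ‖V i (p i) (ι i h) - ι i h‖) l (𝓝 0) := by
  refine squeeze_zero (fun _ => norm_nonneg _) (fun i => (hV i).norm_map_sub_le (p i) h) ?_
  simpa using (((hp.const_sub h).norm.const_mul ‖h‖).const_mul 2).sqrt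

end IsIsometricDilation

section Discretisation

/-- The multiples of `1 / n` in the quarter plane, indexed by `ℕ × ℕ`. For `n = 0` the junk value
of the division makes every mesh point `0`. -/
noncomputable def meshPoint (n : ℕ) : ℕ × ℕ →+ ℝ≥0 × ℝ≥0 where
  toFun a := (a.1 / n, a.2 / n)
  map_zero' := by simp
  map_add' a b := by simp [add_div]

/-- The index of the largest point of the mesh of width `1 / n` below `p`. -/
noncomputable def meshIndex (n : ℕ) (p : ℝ≥0 × ℝ≥0) : ℕ × ℕ :=
  (⌊p.1 * n⌋₊, ⌊p.2 * n⌋₊)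

theorem meshIndex_add_le (n : ℕ) (p q : ℝ≥0 × ℝ≥0) :
    meshIndex n p + meshIndex n q ≤ meshIndex n (p + q) := by
  have hfloor (s t : ℝ≥0) : ⌊s⌋₊ + ⌊t⌋₊ ≤ ⌊s + t⌋₊ := Nat.le_floor <| by
    push_cast
    exact add_le_add (Nat.floor_le s.2) (Nat.floor_le t.2)
  constructor <;> simpa [meshIndex, add_mul] using hfloor _ _

theorem tendsto_meshPoint_meshIndex (p : ℝ≥0 × ℝ≥0) :
    Tendsto (fun n => meshPoint n (meshIndex n p)) atTop (𝓝 p) := by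
  have hfloor (s : ℝ≥0) : Tendsto (fun n : ℕ => (⌊s * n⌋₊ : ℝ≥0) / n) atTop (𝓝 s) := by
    refine NNReal.tendsto_coe.1 ?_
    have h := (tendsto_nat_floor_mul_div_atTop s.2).comp (tendsto_natCast_atTop_atTop (R := ℝ))
    have hcoe (n : ℕ) : ⌊(s : ℝ) * n⌋₊ = ⌊s * n⌋₊ := Nonneg.nat_floor_coe (s * (n : ℝ≥0))
    simpa [Function.comp_def, hcoe] using h
  exact (hfloor p.1).prodMk_nhds (hfloor p.2)

theorem exists_meshIndex_add (p q : ℝ≥0 × ℝ≥0) :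
    ∃ ε : ℕ → ℕ × ℕ, (∀ n, meshIndex n (p + q) = meshIndex n p + (meshIndex n q + ε n)) ∧
      Tendsto (fun n => meshPoint n (ε n)) atTop (𝓝 0) := by
  choose ε hε using fun n => exists_add_of_le (meshIndex_add_le n p q)
  refine ⟨ε, fun n => (hε n).trans (add_assoc _ _ _), ?_⟩
  have hsum := tendsto_meshPoint_meshIndex (p + q)
  have hparts := (tendsto_meshPoint_meshIndex p).add (tendsto_meshPoint_meshIndex q)
  have hsub := (hsum.fst_nhds.sub hparts.fst_nhds).prodMk_nhds
    (hsum.snd_nhds.sub hparts.snd_nhds)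
  rw [tsub_self, tsub_self] at hsub
  refine hsub.congr fun n => ?_
  simp only [hε, map_add, Prod.fst_add, Prod.snd_add, add_tsub_cancel_left]

end Discretisation

section ContractionSemigroups

variable {𝕜 M N H : Type*} [RCLike 𝕜] [AddMonoid M] [TopologicalSpace M] [AddMonoid N]
  [TopologicalSpace N] [NormedAddCommGroup H] [InnerProductSpace 𝕜 H]

namespace IsContractionSemigroup

theorem comp_addMonoidHom {S : M → H →L[𝕜] H} (hS : IsContractionSemigroup S) (f : N →+ M)
    (hf : Continuous f) : IsContractionSemigroup fun p => S (f p) where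
  map_zero := by rw [map_zero, hS.map_zero]
  map_add p q := by rw [map_add, hS.map_add]
  norm_le_one p := hS.norm_le_one (f p)
  continuous_apply x := (hS.continuous_apply x).comp hf

theorem prod {S : M → H →L[𝕜] H} {T : N → H →L[𝕜] H} (hS : IsContractionSemigroup S)
    (hT : IsContractionSemigroup T) (hcomm : ∀ p q, Commute (S p) (T q)) :
    IsContractionSemigroup fun p : M × N => S p.1 * T p.2 where
  map_zero := by simp [hS.map_zero, hT.map_zero]
  map_add p q := by
    rw [Prod.fst_add, Prod.snd_add, hS.map_add, hT.map_add]
    exact (hcomm _ _).mul_mul_mul_comm _ _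
  norm_le_one p := (norm_mul_le _ _).trans
    (mul_le_one₀ (hS.norm_le_one _) (norm_nonneg _) (hT.norm_le_one _))
  continuous_apply x := continuous_iff_continuousAt.2 fun p => by
    have hcont : Tendsto (fun q : M × N => S q.1 (T p.2 x)) (𝓝 p) (𝓝 (S p.1 (T p.2 x))) :=
      ((hS.continuous_apply _).comp continuous_fst).tendsto p
    refine hcont.congr_dist (squeeze_zero (fun _ => dist_nonneg) (fun q => ?_)
      (tendsto_iff_dist_tendsto_zero.1 (((hT.continuous_apply x).comp continuous_snd).tendsto p)))
    rw [dist_comm, dist_eq_norm, dist_eq_norm]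
    change ‖S q.1 (T q.2 x) - _‖ ≤ _
    rw [← map_sub]
    exact hS.norm_apply_le _ _

theorem of_real {T : ℝ → H →L[𝕜] H} (hcontr : ∀ s : ℝ, 0 ≤ s → ‖T s‖ ≤ 1) (hzero : T 0 = 1)
    (hadd : ∀ s t : ℝ, 0 ≤ s → 0 ≤ t → T (s + t) = T s ∘L T t)
    (hcont : ∀ x : H, ContinuousOn (fun s : ℝ => T s x) (Set.Ici (0 : ℝ))) :
    IsContractionSemigroup fun s : ℝ≥0 => T s where
  map_zero := hzero
  map_add s t := hadd s t s.2 t.2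
  norm_le_one s := hcontr s s.2
  continuous_apply x := (hcont x).comp_continuous NNReal.continuous_coe fun s => s.2

end IsContractionSemigroup

end ContractionSemigroups

section MinimalDilation

variable {𝕜 : Type*} [RCLike 𝕜]

theorem exists_minimal_isometricDilation {H : Type u} [NormedAddCommGroup H]
    [InnerProductSpace 𝕜 H] {S : ℝ≥0 × ℝ≥0 → H →L[𝕜] H} (hS : IsContractionSemigroup S) :
    ∃ (K : Type u) (_ : NormedAddCommGroup K) (_ : InnerProductSpace 𝕜 K) (_ : CompleteSpace K)
      (ι : H →ₗᵢ[𝕜] K) (V : ℝ≥0 × ℝ≥0 → K →ₗᵢ[𝕜] K),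
      IsIsometricDilation S ι V ∧ DenseRange (orbitMap ι V) := by
  choose 𝒦 _ _ ι V hV using fun n : ℕ => exists_isometricDilation_nat_prod
    (hS.comp_addMonoidHom (meshPoint n) continuous_of_discreteTopology)
  refine exists_minimal_isometricDilation_of_tendsto (l := atTop) (ι := ι)
    (W := fun n p => V n (meshIndex n p)) (fun n => ?_) (fun p q h => ?_) fun p h h' => ?_
  · simpa [meshIndex, Prod.mk_zero_zero] using (hV n).map_zero
  · obtain ⟨ε, hε, hε₀⟩ := exists_meshIndex_add p q
    have hSε : Tendsto (fun n => S (meshPoint n (ε n)) h) atTop (𝓝 h) := by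
      simpa [hS.map_zero, Function.comp_def] using ((hS.continuous_apply h).tendsto 0).comp hε₀
    refine (IsIsometricDilation.tendsto_norm_map_sub hV hSε).congr fun n => ?_
    rw [hε, (hV n).map_add, (hV n).map_add]
    change _ = ‖V n (meshIndex n p) (V n (meshIndex n q) (V n (ε n) (ι n h))) - _‖
    rw [← map_sub, ← map_sub, LinearIsometry.norm_map, LinearIsometry.norm_map]
  · simp only [(hV _).inner_map]
    exact tendsto_const_nhds.inner
      (((hS.continuous_apply h).tendsto p).comp (tendsto_meshPoint_meshIndex p))

variable {M H K : Type*} [AddCommMonoid M] [TopologicalSpace M] [NormedAddCommGroup H]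
  [InnerProductSpace 𝕜 H] [NormedAddCommGroup K] [InnerProductSpace 𝕜 K]

theorem tendsto_apply_of_denseRange {X α : Type*} {l : Filter α} {V : α → K →ₗᵢ[𝕜] K}
    {e : X → K} (he : DenseRange e) (hV : ∀ x, Tendsto (fun i => V i (e x)) l (𝓝 (e x)))
    (k : K) : Tendsto (fun i => V i k) l (𝓝 k) := by
  have hequi : Equicontinuous fun i => ⇑(V i) :=
    (LipschitzWith.uniformEquicontinuous _ 1 fun i => (V i).lipschitz).equicontinuous
  exact he.induction_on (p := fun k => Tendsto (fun i => V i k) l (𝓝 k)) k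
    (hequi.isClosed_setOfPred_tendsto continuous_id) hV

theorem IsIsometricDilation.tendsto_nhds_zero {S : M → H →L[𝕜] H} {ι : H →ₗᵢ[𝕜] K}
    {V : M → K →ₗᵢ[𝕜] K} (hV : IsIsometricDilation S ι V) (hS : IsContractionSemigroup S)
    (hdense : DenseRange (orbitMap ι V)) (k : K) : Tendsto (fun p => V p k) (𝓝 0) (𝓝 k) := by
  refine tendsto_apply_of_denseRange hdense (fun x => ?_) k
  induction x using Finsupp.induction_linear with
  | zero => simp
  | add x y hx hy => simpa only [map_add] using hx.add hy
  | single q h =>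
    have hSh : Tendsto (fun p => S p h) (𝓝 0) (𝓝 h) := by
      simpa [hS.map_zero] using (hS.continuous_apply h).tendsto 0
    have hVh : Tendsto (fun p => V p (ι h)) (𝓝 0) (𝓝 (ι h)) := tendsto_iff_norm_sub_tendsto_zero.2
      (IsIsometricDilation.tendsto_norm_map_sub (fun _ => hV) hSh)
    rw [orbitMap_single]
    refine (((V q).continuous.tendsto _).comp hVh).congr fun p => ?_
    change (V q * V p) (ι h) = (V p * V q) (ι h)
    rw [← hV.map_add, ← hV.map_add, add_comm]

theorem continuous_apply_of_tendsto_nhds_zero {V : ℝ≥0 → K →ₗᵢ[𝕜] K}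
    (hV : ∀ s t, V (s + t) = V s * V t) {k : K} (hk : Tendsto (fun s => V s k) (𝓝 0) (𝓝 k)) :
    Continuous fun s => V s k := by
  have hadd (s d : ℝ≥0) : dist (V (s + d) k) (V s k) = dist (V d k) k := by
    rw [hV]
    exact (V s).dist_map _ _
  have hdist (s t : ℝ≥0) : dist (V s k) (V t k) = dist (V (nndist s t) k) k := by
    wlog hst : s ≤ t generalizing s t
    · rw [dist_comm, nndist_comm, this t s (le_of_not_ge hst)]
    obtain ⟨d, rfl⟩ := exists_add_of_le hst
    rw [dist_comm, hadd, show nndist s (s + d) = d by ext; simp [NNReal.dist_eq]]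
  refine continuous_iff_continuousAt.2 fun t => tendsto_iff_dist_tendsto_zero.2 ?_
  have hnndist : Tendsto (fun s => nndist s t) (𝓝 t) (𝓝 0) := by
    simpa using (continuous_id.nndist (continuous_const (y := t))).tendsto t
  simpa only [hdist, Function.comp_def] using (tendsto_iff_dist_tendsto_zero.1 hk).comp hnndist

theorem IsIsometricDilation.continuous_comp {S : M → H →L[𝕜] H} {ι : H →ₗᵢ[𝕜] K}
    {V : M → K →ₗᵢ[𝕜] K} (hV : IsIsometricDilation S ι V) (hS : IsContractionSemigroup S)
    (hdense : DenseRange (orbitMap ι V)) (f : ℝ≥0 →+ M) (hf : Continuous f) (k : K) :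
    Continuous fun s => V (f s) k :=
  continuous_apply_of_tendsto_nhds_zero (V := fun s => V (f s))
    (fun s t => by rw [map_add, hV.map_add])
    ((hV.tendsto_nhds_zero hS hdense k).comp (hf.tendsto' 0 0 (map_zero f)))

end MinimalDilation

section RealParameters

variable {𝕜 K : Type*} [RCLike 𝕜] [NormedAddCommGroup K] [InnerProductSpace 𝕜 K]

/-- A family of isometries indexed by `ℝ≥0`, viewed as a family of operators indexed by `ℝ` and
frozen at time `0` for negative times. -/
def extendReal (W : ℝ≥0 → K →ₗᵢ[𝕜] K) (s : ℝ) : K →L[𝕜] K :=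
  (W s.toNNReal).toContinuousLinearMap

theorem extendReal_apply (W : ℝ≥0 → K →ₗᵢ[𝕜] K) (s : ℝ) (x : K) :
    extendReal W s x = W s.toNNReal x :=
  rfl

theorem extendReal_zero {W : ℝ≥0 → K →ₗᵢ[𝕜] K} (hW : W 0 = 1) : extendReal W 0 = 1 := by
  ext x
  rw [extendReal_apply, Real.toNNReal_zero, hW]
  rfl

theorem extendReal_add {W : ℝ≥0 → K →ₗᵢ[𝕜] K} (hW : ∀ s t, W (s + t) = W s * W t) {s t : ℝ}
    (hs : 0 ≤ s) (ht : 0 ≤ t) : extendReal W (s + t) = extendReal W s ∘L extendReal W t := by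
  ext x
  rw [extendReal_apply, Real.toNNReal_add hs ht, hW]
  rfl

theorem continuous_extendReal_apply {W : ℝ≥0 → K →ₗᵢ[𝕜] K} {x : K}
    (hW : Continuous fun s => W s x) : Continuous fun s => extendReal W s x :=
  hW.comp continuous_real_toNNReal

theorem topologicalClosure_span_eq_top_of_denseRange_orbitMap {M H : Type*}
    [NormedAddCommGroup H] [InnerProductSpace 𝕜 H] {ι : H →ₗᵢ[𝕜] K} {V : M → K →ₗᵢ[𝕜] K}
    (hdense : DenseRange (orbitMap ι V)) {s : Set K} (hs : ∀ p h, V p (ι h) ∈ s) :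
    (Submodule.span 𝕜 s).topologicalClosure = ⊤ := by
  refine Submodule.dense_iff_topologicalClosure_eq_top.1 (hdense.mono ?_)
  rintro _ ⟨x, rfl⟩
  induction x using Finsupp.induction_linear with
  | zero => simp
  | add x y hx hy => exact map_add (orbitMap ι V) x y ▸ add_mem hx hy
  | single p h => simpa only [orbitMap_single] using Submodule.subset_span (hs p h)

end RealParameters

theorem two_parameter_contraction_semigroup_isometric_dilation_general
    {𝕜 : Type*} [RCLike 𝕜] {H : Type u} [NormedAddCommGroup H] [InnerProductSpace 𝕜 H]
    (T₁ T₂ : ℝ → H →L[𝕜] H)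
    (hT₁contr : ∀ s : ℝ, 0 ≤ s → ‖T₁ s‖ ≤ 1)
    (hT₂contr : ∀ s : ℝ, 0 ≤ s → ‖T₂ s‖ ≤ 1)
    (hT₁0 : T₁ 0 = 1) (hT₂0 : T₂ 0 = 1)
    (hT₁sg : ∀ s t : ℝ, 0 ≤ s → 0 ≤ t → T₁ (s + t) = T₁ s ∘L T₁ t)
    (hT₂sg : ∀ s t : ℝ, 0 ≤ s → 0 ≤ t → T₂ (s + t) = T₂ s ∘L T₂ t)
    (hT₁cont : ∀ x : H, ContinuousOn (fun s : ℝ => T₁ s x) (Set.Ici (0 : ℝ)))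
    (hT₂cont : ∀ x : H, ContinuousOn (fun s : ℝ => T₂ s x) (Set.Ici (0 : ℝ)))
    (hcomm : ∀ s t : ℝ, 0 ≤ s → 0 ≤ t → T₁ s ∘L T₂ t = T₂ t ∘L T₁ s) :
    ∃ (K : Type u) (_ : NormedAddCommGroup K) (_ : InnerProductSpace 𝕜 K)
      (_ : CompleteSpace K) (ι : H →L[𝕜] K) (V₁ V₂ : ℝ → K →L[𝕜] K),
      (∀ h : H, ‖ι h‖ = ‖h‖) ∧
      V₁ 0 = 1 ∧ V₂ 0 = 1 ∧
      (∀ s t : ℝ, 0 ≤ s → 0 ≤ t → V₁ (s + t) = V₁ s ∘L V₁ t) ∧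
      (∀ s t : ℝ, 0 ≤ s → 0 ≤ t → V₂ (s + t) = V₂ s ∘L V₂ t) ∧
      (∀ s : ℝ, 0 ≤ s → ∀ x : K, ‖V₁ s x‖ = ‖x‖) ∧
      (∀ s : ℝ, 0 ≤ s → ∀ x : K, ‖V₂ s x‖ = ‖x‖) ∧
      (∀ x : K, ContinuousOn (fun s : ℝ => V₁ s x) (Set.Ici (0 : ℝ))) ∧
      (∀ x : K, ContinuousOn (fun s : ℝ => V₂ s x) (Set.Ici (0 : ℝ))) ∧
      (∀ s t : ℝ, 0 ≤ s → 0 ≤ t → V₁ s ∘L V₂ t = V₂ t ∘L V₁ s) ∧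
      (∀ s t : ℝ, 0 ≤ s → 0 ≤ t → ∀ h h' : H,
        ⟪ι h', V₁ s (V₂ t (ι h))⟫_𝕜 = ⟪h', T₁ s (T₂ t h)⟫_𝕜) ∧
      (Submodule.span 𝕜 {x : K | ∃ (s t : ℝ) (h : H),
          0 ≤ s ∧ 0 ≤ t ∧ x = V₁ s (V₂ t (ι h))}).topologicalClosure = ⊤ := by
  have hS := (IsContractionSemigroup.of_real hT₁contr hT₁0 hT₁sg hT₁cont).prod
    (.of_real hT₂contr hT₂0 hT₂sg hT₂cont) fun s t => hcomm s t s.2 t.2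
  obtain ⟨K, _, _, _, ι, V, hV, hdense⟩ := exists_minimal_isometricDilation hS
  have hadd₁ (s t : ℝ≥0) : V (s + t, 0) = V (s, 0) * V (t, 0) := by simp [← hV.map_add]
  have hadd₂ (s t : ℝ≥0) : V (0, s + t) = V (0, s) * V (0, t) := by simp [← hV.map_add]
  have hprod (s t : ℝ≥0) : V (s, 0) * V (0, t) = V (s, t) := by simp [← hV.map_add]
  have hprod' (s t : ℝ≥0) : V (0, t) * V (s, 0) = V (s, t) := by simp [← hV.map_add]
  have happly (s t : ℝ) (x : K) : extendReal (fun s => V (s, 0)) s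
      (extendReal (fun t => V (0, t)) t x) = V (s.toNNReal, t.toNNReal) x :=
    DFunLike.congr_fun (hprod _ _) x
  have hcont₁ (x : K) := continuous_extendReal_apply <|
    hV.continuous_comp hS hdense (AddMonoidHom.inl ℝ≥0 ℝ≥0) (Continuous.prodMk_left 0) x
  have hcont₂ (x : K) := continuous_extendReal_apply <|
    hV.continuous_comp hS hdense (AddMonoidHom.inr ℝ≥0 ℝ≥0) (Continuous.prodMk_right 0) x
  refine ⟨K, inferInstance, inferInstance, inferInstance, ι.toContinuousLinearMap,
    extendReal fun s => V (s, 0), extendReal fun t => V (0, t), ι.norm_map,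
    extendReal_zero hV.map_zero, extendReal_zero hV.map_zero,
    fun _ _ => extendReal_add hadd₁, fun _ _ => extendReal_add hadd₂,
    fun _ _ => (V _).norm_map, fun _ _ => (V _).norm_map, fun x => (hcont₁ x).continuousOn,
    fun x => (hcont₂ x).continuousOn, fun s t _ _ => ?_, fun s t hs ht h h' => ?_,
    topologicalClosure_span_eq_top_of_denseRange_orbitMap hdense fun p h => ?_⟩
  · ext x
    exact (happly s t x).trans (DFunLike.congr_fun (hprod' _ _) x).symm
  · rw [happly, LinearIsometry.coe_toContinuousLinearMap, hV.inner_map]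
    simp [hs, ht]
  · exact ⟨p.1, p.2, h, p.1.2, p.2.2, by simp [happly]⟩

theorem eq_adjoint_comp_comp_of_inner_eq {𝕜 H K : Type*} [RCLike 𝕜] [NormedAddCommGroup H]
    [InnerProductSpace 𝕜 H] [CompleteSpace H] [NormedAddCommGroup K] [InnerProductSpace 𝕜 K]
    [CompleteSpace K] {ι : H →L[𝕜] K} {A : H →L[𝕜] H} {B : K →L[𝕜] K}
    (h : ∀ x y, ⟪ι y, B (ι x)⟫_𝕜 = ⟪y, A x⟫_𝕜) : A = adjoint ι ∘L B ∘L ι := by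
  ext x
  refine ext_inner_left 𝕜 fun y => ?_
  rw [comp_apply, adjoint_inner_right]
  exact (h x y).symm

/-- **Słociński/Ptak theorem (continuous two-parameter Ando dilation).**
Two commuting strongly continuous one-parameter semigroups of contractions on a
complex Hilbert space `H` admit a minimal isometric dilation: a Hilbert space `K ⊇ H`
carrying two commuting strongly continuous semigroups of isometries compressing to
`T₁(s)T₂(t)` on `H`. -/
theorem two_parameter_contraction_semigroup_isometric_dilation
    {H : Type} [NormedAddCommGroup H] [InnerProductSpace ℂ H] [CompleteSpace H]
    (T₁ T₂ : ℝ → H →L[ℂ] H)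
    (hT₁contr : ∀ s : ℝ, 0 ≤ s → ‖T₁ s‖ ≤ 1)
    (hT₂contr : ∀ s : ℝ, 0 ≤ s → ‖T₂ s‖ ≤ 1)
    (hT₁0 : T₁ 0 = 1) (hT₂0 : T₂ 0 = 1)
    (hT₁sg : ∀ s t : ℝ, 0 ≤ s → 0 ≤ t → T₁ (s + t) = T₁ s ∘L T₁ t)
    (hT₂sg : ∀ s t : ℝ, 0 ≤ s → 0 ≤ t → T₂ (s + t) = T₂ s ∘L T₂ t)
    (hT₁cont : ∀ x : H, ContinuousOn (fun s : ℝ => T₁ s x) (Set.Ici (0 : ℝ)))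
    (hT₂cont : ∀ x : H, ContinuousOn (fun s : ℝ => T₂ s x) (Set.Ici (0 : ℝ)))
    (hcomm : ∀ s t : ℝ, 0 ≤ s → 0 ≤ t → T₁ s ∘L T₂ t = T₂ t ∘L T₁ s) :
    ∃ (K : Type) (_ : NormedAddCommGroup K) (_ : InnerProductSpace ℂ K)
      (_ : CompleteSpace K) (ι : H →L[ℂ] K) (V₁ V₂ : ℝ → K →L[ℂ] K),
      -- `ι` is an isometric embedding of `H` into `K`
      (∀ h : H, ‖ι h‖ = ‖h‖) ∧
      -- `V₁`, `V₂` are one-parameter semigroups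
      V₁ 0 = 1 ∧ V₂ 0 = 1 ∧
      (∀ s t : ℝ, 0 ≤ s → 0 ≤ t → V₁ (s + t) = V₁ s ∘L V₁ t) ∧
      (∀ s t : ℝ, 0 ≤ s → 0 ≤ t → V₂ (s + t) = V₂ s ∘L V₂ t) ∧
      -- consisting of isometries
      (∀ s : ℝ, 0 ≤ s → ∀ x : K, ‖V₁ s x‖ = ‖x‖) ∧
      (∀ s : ℝ, 0 ≤ s → ∀ x : K, ‖V₂ s x‖ = ‖x‖) ∧
      -- strongly continuous
      (∀ x : K, ContinuousOn (fun s : ℝ => V₁ s x) (Set.Ici (0 : ℝ))) ∧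
      (∀ x : K, ContinuousOn (fun s : ℝ => V₂ s x) (Set.Ici (0 : ℝ))) ∧
      -- commuting
      (∀ s t : ℝ, 0 ≤ s → 0 ≤ t → V₁ s ∘L V₂ t = V₂ t ∘L V₁ s) ∧
      -- dilation property: `T₁(s)T₂(t) = P_H V₁(s)V₂(t)|_H`
      (∀ s t : ℝ, 0 ≤ s → 0 ≤ t →
        T₁ s ∘L T₂ t = adjoint ι ∘L (V₁ s ∘L V₂ t) ∘L ι) ∧
      -- minimality: `K = ⋁_{s,t ≥ 0} V₁(s)V₂(t)H`
      (Submodule.span ℂ {x : K | ∃ (s t : ℝ) (h : H),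
          0 ≤ s ∧ 0 ≤ t ∧ x = V₁ s (V₂ t (ι h))}).topologicalClosure = ⊤ := by
  obtain ⟨K, i₁, i₂, i₃, ι, V₁, V₂, hι, hV₁0, hV₂0, hV₁sg, hV₂sg, hV₁iso, hV₂iso, hV₁cont, hV₂cont,
      hVcomm, hdil, hmin⟩ :=
    two_parameter_contraction_semigroup_isometric_dilation_general T₁ T₂ hT₁contr hT₂contr hT₁0
      hT₂0 hT₁sg hT₂sg hT₁cont hT₂cont hcomm
  exact ⟨K, i₁, i₂, i₃, ι, V₁, V₂, hι, hV₁0, hV₂0, hV₁sg, hV₂sg, hV₁iso, hV₂iso, hV₁cont, hV₂cont,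
    hVcomm, fun s t hs ht => eq_adjoint_comp_comp_of_inner_eq (hdil s t hs ht), hmin⟩
end

section
/- Let Ω be a set and let Σ be a subsemigroup of ℝ₊^Ω (nonnegative real-valued functions on Ω under pointwise addition) containing 0 which is +,−-closed. Let V = {V_s}_{s∈Σ} be a semigroup of isometries on a complex Hilbert space K (V_0 = I and V_s V_t = V_{s+t}). Then there exist a Hilbert space L containing K (via an isometric embedding) and a semigroup of unitaries U = {U_s}_{s∈Σ} on L (U_0 = I, U_s U_t = U_{s+t}) which is a regular unitary dilation of V, i.e., P_K U_{s₋}* U_{s₊}|_K = V_{s₋}* V_{s₊} for all s ∈ Σ − Σ, and which is minimal in the sense that L is the closed linear span of {U_{s₋}* U_{s₊} k : s ∈ Σ − Σ, k ∈ K}. Moreover, the minimal regular unitary dilation is unique up to a unitary equivalence fixing K. -/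
open ContinuousLinearMap

/-- For `s : Ω → ℝ`, the positive part `s₊ : j ↦ max (s j) 0`. -/
noncomputable def posPart' {Ω : Type*} (s : Ω → ℝ) : Ω → ℝ := fun j => max (s j) 0

/-- For `s : Ω → ℝ`, the negative part `s₋ = s₊ - s`. -/
noncomputable def negPart' {Ω : Type*} (s : Ω → ℝ) : Ω → ℝ := posPart' s - s

/-!
For isometries `V`, the operator `V_n* V_p` depends only on the difference `p - n`, because
`⟪V_p k, V_n l⟫ = ⟪V_a k, V_b l⟫` as soon as `a + n = b + p`.  Applied to `V` and to `U`, this turns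
the regular dilation identity into `P_K U_b* U_a|_K = V_b* V_a` for all `a`, `b`.  With `b = 0`,
`P_K U_a|_K` is the isometry `V_a`, so `U_a` maps `K` into itself: minimal regular unitary dilations
are the same thing as minimal unitary extensions.  In such an extension the total family
`γ_a k = U_a* k` has Gram matrix `⟪γ_a k, γ_b l⟫ = ⟪V_b k, V_a l⟫`, which depends on `V` alone, and
this gives uniqueness.  For existence, the Gram matrix is positive semidefinite: for finitely many
indices `a` with sum `N` it equals `⟪V_(N-a) k, V_(N-b) l⟫`.  A family `γ` realizing it is therefore
available, `(a, k) ↦ γ_a (V_s k)` is another such family with the same span, and `U_s` is the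
resulting unitary.
-/

open scoped InnerProductSpace

section GramMatrix

universe u v w

theorem exists_linearIsometryEquiv_of_inner_eq {𝕜 X E F : Type*} [RCLike 𝕜]
    [NormedAddCommGroup E] [InnerProductSpace 𝕜 E] [CompleteSpace E]
    [NormedAddCommGroup F] [InnerProductSpace 𝕜 F] [CompleteSpace F]
    {x : X → E} {y : X → F} (hxy : ∀ i j, ⟪x i, x j⟫_𝕜 = ⟪y i, y j⟫_𝕜)
    (hx : Dense (Submodule.span 𝕜 (Set.range x) : Set E))
    (hy : Dense (Submodule.span 𝕜 (Set.range y) : Set F)) :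
    ∃ W : E ≃ₗᵢ[𝕜] F, ∀ i, W (x i) = y i := by
  have hx' : DenseRange (Finsupp.linearCombination 𝕜 x) := by
    rwa [← Finsupp.range_linearCombination] at hx
  have hy' : DenseRange (Finsupp.linearCombination 𝕜 y) := by
    rwa [← Finsupp.range_linearCombination] at hy
  have hnorm (c : X →₀ 𝕜) :
      ‖Finsupp.linearCombination 𝕜 y c‖ = ‖Finsupp.linearCombination 𝕜 x c‖ := by
    simp only [@norm_eq_sqrt_re_inner 𝕜, Finsupp.linearCombination_apply, Finsupp.sum_inner,
      Finsupp.inner_sum, inner_smul_left, inner_smul_right, hxy]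
  refine ⟨(LinearEquiv.refl 𝕜 (X →₀ 𝕜)).extendOfIsometry _ _ hx' hy' hnorm, fun i => ?_⟩
  simpa using LinearEquiv.extendOfIsometry_eq (LinearEquiv.refl 𝕜 (X →₀ 𝕜)) _ _
    hx' hy' hnorm (Finsupp.single i 1)

theorem exists_kolmogorov_decomposition {𝕜 : Type u} {X : Type v} {K : Type w} [RCLike 𝕜]
    [NormedAddCommGroup K] [InnerProductSpace 𝕜 K] [CompleteSpace K]
    {k : Matrix X X (K →L[𝕜] K)} (hk : k.PosSemidef) :
    ∃ (L : Type (max u v w)) (_ : NormedAddCommGroup L) (_ : InnerProductSpace 𝕜 L)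
      (_ : CompleteSpace L) (γ : X → K →L[𝕜] L),
      (∀ a b x y, ⟪γ a x, γ b y⟫_𝕜 = ⟪k b a x, y⟫_𝕜) ∧
      Dense (Submodule.span 𝕜 (Set.range fun p : X × K => γ p.1 p.2) : Set L) := by
  have : Fact k.PosSemidef := ⟨hk⟩
  refine ⟨RKHS.OfKernel k, inferInstance, inferInstance, inferInstance,
    RKHS.kerFun (RKHS.OfKernel k), fun a b x y => ?_, ?_⟩
  · rw [← RKHS.kernel_inner, RKHS.OfKernel.kernel_ofKernel]
  · rw [Submodule.dense_iff_topologicalClosure_eq_top, ← RKHS.kerFun_dense (RKHS.OfKernel k)]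
    congr 2
    ext x
    simp only [Set.mem_range, Prod.exists, Set.mem_ofPred_eq]

end GramMatrix

section Semigroups

variable {𝕜 M K L : Type*} [RCLike 𝕜] [AddCommMonoid M]
  [NormedAddCommGroup K] [InnerProductSpace 𝕜 K]
  [NormedAddCommGroup L] [InnerProductSpace 𝕜 L] [CompleteSpace L]

/-- `V` is a semigroup of isometries on `K` indexed by the commutative monoid `M`. -/
structure IsIsometricSemigroup (V : M → K →L[𝕜] K) : Prop where
  map_zero : V 0 = 1
  map_add : ∀ a b, V (a + b) = V a ∘L V b
  norm_map : ∀ s x, ‖V s x‖ = ‖x‖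

/-- `U` is a semigroup of unitaries on `L` indexed by the commutative monoid `M`. -/
structure IsUnitarySemigroup (U : M → L →L[𝕜] L) : Prop where
  map_zero : U 0 = 1
  map_add : ∀ a b, U (a + b) = U a ∘L U b
  mem_unitary : ∀ s, U s ∈ unitary (L →L[𝕜] L)

namespace IsIsometricSemigroup

variable {V : M → K →L[𝕜] K}

theorem map_add_apply (hV : IsIsometricSemigroup V) (a b : M) (k : K) :
    V (a + b) k = V a (V b k) :=
  DFunLike.congr_fun (hV.map_add a b) k

theorem apply_comm (hV : IsIsometricSemigroup V) (a b : M) (k : K) :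
    V a (V b k) = V b (V a k) := by
  rw [← hV.map_add_apply, add_comm, hV.map_add_apply]

theorem inner_map_map (hV : IsIsometricSemigroup V) (s : M) (k l : K) :
    ⟪V s k, V s l⟫_𝕜 = ⟪k, l⟫_𝕜 :=
  (LinearMap.norm_map_iff_inner_map_map (V s)).mp (hV.norm_map s) k l

theorem inner_eq_inner_of_add_eq_add (hV : IsIsometricSemigroup V) {a b n p : M}
    (h : a + n = b + p) (k l : K) : ⟪V p k, V n l⟫_𝕜 = ⟪V a k, V b l⟫_𝕜 :=
  calc ⟪V p k, V n l⟫_𝕜 = ⟪V a (V p k), V (a + n) l⟫_𝕜 := by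
        rw [hV.map_add_apply, hV.inner_map_map]
    _ = ⟪V p (V a k), V p (V b l)⟫_𝕜 := by
        rw [h, hV.apply_comm a p, add_comm b p, hV.map_add_apply]
    _ = ⟪V a k, V b l⟫_𝕜 := hV.inner_map_map p _ _

variable [CompleteSpace K]

theorem adjoint_comp_eq_of_add_eq_add (hV : IsIsometricSemigroup V) {a b n p : M}
    (h : a + n = b + p) : adjoint (V n) ∘L V p = adjoint (V b) ∘L V a := by
  refine ContinuousLinearMap.ext fun k => ext_inner_right 𝕜 fun l => ?_
  simp only [comp_apply, adjoint_inner_left]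
  exact hV.inner_eq_inner_of_add_eq_add h k l

theorem posSemidef_adjoint_comp (hV : IsIsometricSemigroup V) :
    (Matrix.of fun a b => adjoint (V b) ∘L V a).PosSemidef := by
  classical
  have hiff := (RKHS.posSemidef_tfae (K := Matrix.of fun a b => adjoint (V b) ∘L V a)).out 0 2
  refine hiff.mpr ⟨?_, fun f => ?_⟩
  · ext a b : 2
    simp [star_eq_adjoint, adjoint_comp]
  · let c (a : M) : M := ∑ x ∈ f.support.erase a, x
    have hc (a : M) (ha : a ∈ f.support) : c a + a = ∑ x ∈ f.support, x :=
      Finset.sum_erase_add _ _ ha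
    have hsum : (f.sum fun a k => f.sum fun b l => ⟪(adjoint (V a) ∘L V b) k, l⟫_𝕜) =
        ⟪∑ a ∈ f.support, V (c a) (f a), ∑ b ∈ f.support, V (c b) (f b)⟫_𝕜 := by
      simp only [Finsupp.sum, sum_inner, inner_sum, comp_apply, adjoint_inner_left]
      rw [Finset.sum_comm]
      refine Finset.sum_congr rfl fun b hb => Finset.sum_congr rfl fun a ha => ?_
      exact hV.inner_eq_inner_of_add_eq_add ((hc a ha).trans (hc b hb).symm) _ _
    simp only [Matrix.of_apply]
    rw [hsum]
    exact inner_self_nonneg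

end IsIsometricSemigroup

namespace IsUnitarySemigroup

variable {U : M → L →L[𝕜] L}

theorem isIsometricSemigroup (hU : IsUnitarySemigroup U) : IsIsometricSemigroup U :=
  ⟨hU.map_zero, hU.map_add, fun s => norm_map_of_mem_unitary (hU.mem_unitary s)⟩

theorem adjoint_apply_apply (hU : IsUnitarySemigroup U) (s : M) (x : L) :
    adjoint (U s) (U s x) = x :=
  DFunLike.congr_fun (Unitary.star_mul_self_of_mem (hU.mem_unitary s)) x

theorem apply_adjoint_apply (hU : IsUnitarySemigroup U) (s : M) (x : L) :
    U s (adjoint (U s) x) = x :=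
  DFunLike.congr_fun (Unitary.mul_star_self_of_mem (hU.mem_unitary s)) x

theorem apply_adjoint_comm (hU : IsUnitarySemigroup U) (a s : M) (x : L) :
    U s (adjoint (U a) x) = adjoint (U a) (U s x) := by
  rw [← hU.adjoint_apply_apply a (U s _), hU.isIsometricSemigroup.apply_comm a s,
    hU.apply_adjoint_apply]

end IsUnitarySemigroup

end Semigroups

section UnitaryExtension

universe u v w

variable {𝕜 M K L L' : Type*} [RCLike 𝕜]
  [NormedAddCommGroup K] [InnerProductSpace 𝕜 K]
  [NormedAddCommGroup L] [InnerProductSpace 𝕜 L]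
  [NormedAddCommGroup L'] [InnerProductSpace 𝕜 L'] {V : M → K →L[𝕜] K}

/-- The family `γ` in `L` has the Gram matrix and the totality that the backward orbit
`γ a k = U_a* k` of `K` has in a minimal unitary extension `U` of `V`. It is used to compare
extensions and to construct them, so neither `U` nor an embedding of `K` is mentioned. -/
structure IsBackwardOrbit (V : M → K →L[𝕜] K) (γ : M → K →L[𝕜] L) : Prop where
  inner_apply : ∀ a b k l, ⟪γ a k, γ b l⟫_𝕜 = ⟪V b k, V a l⟫_𝕜
  dense_span : Dense (Submodule.span 𝕜 (Set.range fun p : M × K => γ p.1 p.2) : Set L)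

namespace IsBackwardOrbit

variable {γ : M → K →L[𝕜] L} {γ' : M → K →L[𝕜] L'}

theorem continuousLinearMap_ext (hγ : IsBackwardOrbit V γ) {A B : L →L[𝕜] L'}
    (h : ∀ a k, A (γ a k) = B (γ a k)) : A = B :=
  ContinuousLinearMap.ext_on hγ.dense_span (Set.forall_mem_range.mpr fun p => h p.1 p.2)

theorem exists_linearIsometryEquiv [CompleteSpace L] [CompleteSpace L']
    (hγ : IsBackwardOrbit V γ) (hγ' : IsBackwardOrbit V γ') :
    ∃ W : L ≃ₗᵢ[𝕜] L', ∀ a k, W (γ a k) = γ' a k := by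
  obtain ⟨W, hW⟩ := exists_linearIsometryEquiv_of_inner_eq
    (fun p q : M × K => (hγ.inner_apply p.1 q.1 p.2 q.2).trans
      (hγ'.inner_apply p.1 q.1 p.2 q.2).symm) hγ.dense_span hγ'.dense_span
  exact ⟨W, fun a k => hW (a, k)⟩

variable [AddCommMonoid M]

theorem apply_add_apply (hγ : IsBackwardOrbit V γ) (hV : IsIsometricSemigroup V)
    (a s : M) (k : K) : γ (a + s) (V s k) = γ a k := by
  have horth (b : M) (l : K) : ⟪γ (a + s) (V s k) - γ a k, γ b l⟫_𝕜 = 0 := by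
    rw [inner_sub_left, hγ.inner_apply, hγ.inner_apply, ← hV.map_add_apply, sub_eq_zero]
    exact hV.inner_eq_inner_of_add_eq_add (add_left_comm b a s) k l
  rw [← sub_eq_zero, ← inner_self_eq_zero (𝕜 := 𝕜), inner_sub_right, horth, horth, sub_zero]

theorem comp_right (hγ : IsBackwardOrbit V γ) (hV : IsIsometricSemigroup V) (s : M) :
    IsBackwardOrbit V fun a => γ a ∘L V s where
  inner_apply a b k l := by
    rw [comp_apply, comp_apply, hγ.inner_apply, hV.apply_comm b, hV.apply_comm a,
      hV.inner_map_map]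
  dense_span := by
    refine hγ.dense_span.mono (Submodule.span_mono ?_)
    rintro _ ⟨⟨a, k⟩, rfl⟩
    exact ⟨(a + s, k), hγ.apply_add_apply hV a s k⟩

theorem exists_isUnitarySemigroup [CompleteSpace L] (hγ : IsBackwardOrbit V γ)
    (hV : IsIsometricSemigroup V) :
    ∃ U : M → L →L[𝕜] L, IsUnitarySemigroup U ∧ ∀ s a k, U s (γ a k) = γ a (V s k) := by
  choose W hW using fun s => hγ.exists_linearIsometryEquiv (hγ.comp_right hV s)
  let U (s : M) : unitary (L →L[𝕜] L) := Unitary.linearIsometryEquiv.symm (W s)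
  have hU (s a : M) (k : K) : (U s : L →L[𝕜] L) (γ a k) = γ a (V s k) := hW s a k
  refine ⟨fun s => U s, ⟨?_, fun s t => ?_, fun s => (U s).2⟩, hU⟩
  · refine hγ.continuousLinearMap_ext fun a k => ?_
    rw [hU, hV.map_zero, one_def, one_def, id_apply, id_apply]
  · refine hγ.continuousLinearMap_ext fun a k => ?_
    rw [comp_apply, hU, hU, hU, hV.map_add_apply]

end IsBackwardOrbit

variable [AddCommMonoid M] [CompleteSpace L] [CompleteSpace L']

/-- `U` is a semigroup of unitaries on `L` extending `V` along the isometric embedding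
`ι : K → L`, and `L` is the smallest closed subspace containing `K` that reduces `U`.
Minimality is stated through the vectors `U_a* k`, whose span is already invariant under `U`. -/
structure IsMinimalUnitaryExtension (V : M → K →L[𝕜] K) (ι : K →L[𝕜] L) (U : M → L →L[𝕜] L) :
    Prop where
  norm_embed : ∀ k, ‖ι k‖ = ‖k‖
  isUnitarySemigroup : IsUnitarySemigroup U
  apply_embed : ∀ s k, U s (ι k) = ι (V s k)
  dense_span : Dense (Submodule.span 𝕜
    (Set.range fun p : M × K => adjoint (U p.1) (ι p.2)) : Set L)

theorem IsBackwardOrbit.isMinimalUnitaryExtension {γ : M → K →L[𝕜] L} {U : M → L →L[𝕜] L}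
    (hγ : IsBackwardOrbit V γ) (hV : IsIsometricSemigroup V) (hU : IsUnitarySemigroup U)
    (hUγ : ∀ s a k, U s (γ a k) = γ a (V s k)) : IsMinimalUnitaryExtension V (γ 0) U where
  norm_embed k := by
    rw [norm_eq_sqrt_re_inner (𝕜 := 𝕜), hγ.inner_apply, hV.inner_map_map,
      ← norm_eq_sqrt_re_inner]
  isUnitarySemigroup := hU
  apply_embed s := hUγ s 0
  dense_span := by
    have hadj (a : M) (k : K) : adjoint (U a) (γ 0 k) = γ a k := by
      rw [← hγ.apply_add_apply hV 0 a, zero_add, ← hUγ, hU.adjoint_apply_apply]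
    simpa only [hadj] using hγ.dense_span

namespace IsMinimalUnitaryExtension

variable {ι : K →L[𝕜] L} {U : M → L →L[𝕜] L} {ι' : K →L[𝕜] L'} {U' : M → L' →L[𝕜] L'}

theorem inner_embed (h : IsMinimalUnitaryExtension V ι U) (k l : K) :
    ⟪ι k, ι l⟫_𝕜 = ⟪k, l⟫_𝕜 :=
  (LinearMap.norm_map_iff_inner_map_map ι).mp h.norm_embed k l

theorem adjoint_zero_embed (h : IsMinimalUnitaryExtension V ι U) (k : K) :
    adjoint (U 0) (ι k) = ι k := by
  rw [h.isUnitarySemigroup.map_zero, one_def, adjoint_id, id_apply]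

theorem apply_adjoint_embed (h : IsMinimalUnitaryExtension V ι U) (s a : M) (k : K) :
    U s (adjoint (U a) (ι k)) = adjoint (U a) (ι (V s k)) := by
  rw [h.isUnitarySemigroup.apply_adjoint_comm, h.apply_embed]

theorem isBackwardOrbit (h : IsMinimalUnitaryExtension V ι U) :
    IsBackwardOrbit V fun a => adjoint (U a) ∘L ι where
  inner_apply a b k l := by
    rw [comp_apply, comp_apply, adjoint_inner_right, h.apply_adjoint_embed, adjoint_inner_left,
      h.apply_embed, h.inner_embed]
  dense_span := h.dense_span

theorem exists_linearIsometryEquiv (h : IsMinimalUnitaryExtension V ι U)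
    (h' : IsMinimalUnitaryExtension V ι' U') :
    ∃ W : L ≃ₗᵢ[𝕜] L', (∀ k, W (ι k) = ι' k) ∧ ∀ s x, W (U s x) = U' s (W x) := by
  obtain ⟨W, hW⟩ := h.isBackwardOrbit.exists_linearIsometryEquiv h'.isBackwardOrbit
  simp only [comp_apply] at hW
  refine ⟨W, fun k => ?_, fun s => DFunLike.congr_fun (?_ : (W : L →L[𝕜] L') ∘L U s = U' s ∘L W)⟩
  · rw [← h.adjoint_zero_embed, hW, h'.adjoint_zero_embed]
  · refine h.isBackwardOrbit.continuousLinearMap_ext fun a k => ?_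
    simp [h.apply_adjoint_embed, h'.apply_adjoint_embed, hW]

end IsMinimalUnitaryExtension

theorem IsIsometricSemigroup.exists_isMinimalUnitaryExtension {𝕜 : Type u} {M : Type v}
    {K : Type w} [RCLike 𝕜] [AddCommMonoid M] [NormedAddCommGroup K] [InnerProductSpace 𝕜 K]
    [CompleteSpace K] {V : M → K →L[𝕜] K} (hV : IsIsometricSemigroup V) :
    ∃ (L : Type (max u v w)) (_ : NormedAddCommGroup L) (_ : InnerProductSpace 𝕜 L)
      (_ : CompleteSpace L) (ι : K →L[𝕜] L) (U : M → L →L[𝕜] L),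
      IsMinimalUnitaryExtension V ι U := by
  obtain ⟨L, _, _, _, γ, hinner, hdense⟩ :=
    exists_kolmogorov_decomposition hV.posSemidef_adjoint_comp
  have hγ : IsBackwardOrbit V γ := by
    refine ⟨fun a b k l => ?_, hdense⟩
    rw [hinner, Matrix.of_apply, comp_apply, adjoint_inner_left]
  obtain ⟨U, hU, hUγ⟩ := hγ.exists_isUnitarySemigroup hV
  exact ⟨L, inferInstance, inferInstance, inferInstance, γ 0, U,
    hγ.isMinimalUnitaryExtension hV hU hUγ⟩

end UnitaryExtension

section RegularDilation

universe u v w x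

variable {𝕜 G K L : Type*} [RCLike 𝕜] [AddCommGroup G] [Lattice G]
  [NormedAddCommGroup K] [InnerProductSpace 𝕜 K]
  [NormedAddCommGroup L] [InnerProductSpace 𝕜 L] [CompleteSpace L]

/-- The submonoid `S` of a lattice-ordered group is `+,−`-closed: it contains `s⁺` and `s⁻` for
every `s ∈ S - S`. -/
def IsPosNegClosed (S : AddSubmonoid G) : Prop :=
  ∀ a ∈ S, ∀ b ∈ S, (a - b)⁺ ∈ S ∧ (a - b)⁻ ∈ S

/-- `U` is a minimal regular unitary dilation of the semigroup `V` indexed by `S`, where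
`ι : K → L` is the isometric embedding. The families are defined on all of `G`, but only their
values on `S` matter, and the elements of `S - S` are written `a - b`. -/
structure IsMinimalRegularUnitaryDilation [CompleteSpace K] (S : AddSubmonoid G)
    (V : G → K →L[𝕜] K) (ι : K →L[𝕜] L) (U : G → L →L[𝕜] L) : Prop where
  norm_embed : ∀ k, ‖ι k‖ = ‖k‖
  isUnitarySemigroup : IsUnitarySemigroup fun s : S => U s
  compression_eq : ∀ a ∈ S, ∀ b ∈ S,
    adjoint ι ∘L (adjoint (U (a - b)⁻) ∘L U (a - b)⁺) ∘L ι = adjoint (V (a - b)⁻) ∘L V (a - b)⁺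
  topologicalClosure_span_eq_top : (Submodule.span 𝕜 {x : L | ∃ a ∈ S, ∃ b ∈ S, ∃ k : K,
    x = adjoint (U (a - b)⁻) (U (a - b)⁺ (ι k))}).topologicalClosure = ⊤

theorem apply_embed_eq_of_compression_eq [CompleteSpace K] {ι : K →L[𝕜] L} {T : K →L[𝕜] K}
    {U : L →L[𝕜] L} (hι : ∀ k, ‖ι k‖ = ‖k‖) (hT : ∀ k, ‖T k‖ = ‖k‖) (hU : ∀ x, ‖U x‖ ≤ ‖x‖)
    (h : adjoint ι ∘L U ∘L ι = T) (k : K) : U (ι k) = ι (T k) := by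
  refine eq_of_norm_le_re_inner_eq_norm_sq (𝕜 := 𝕜) ?_ ?_
  · simpa only [hι, hT] using hU (ι k)
  · have hTk : adjoint ι (U (ι k)) = T k := DFunLike.congr_fun h k
    rw [← adjoint_inner_left, hTk, inner_self_eq_norm_sq, hι]

variable [AddLeftMono G] {S : AddSubmonoid G}

theorem IsIsometricSemigroup.adjoint_negPart_comp_posPart [CompleteSpace K] {V : G → K →L[𝕜] K}
    (hV : IsIsometricSemigroup fun s : S => V s) (hS : IsPosNegClosed S)
    {a b : G} (ha : a ∈ S) (hb : b ∈ S) :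
    adjoint (V (a - b)⁻) ∘L V (a - b)⁺ = adjoint (V b) ∘L V a := by
  obtain ⟨hp, hn⟩ := hS a ha b hb
  have hab : a + (a - b)⁻ = b + (a - b)⁺ := by
    rw [add_comm b, ← sub_eq_sub_iff_add_eq_add, posPart_sub_negPart]
  exact hV.adjoint_comp_eq_of_add_eq_add (a := ⟨a, ha⟩) (b := ⟨b, hb⟩) (n := ⟨_, hn⟩)
    (p := ⟨_, hp⟩) (Subtype.ext hab)

theorem setOf_regular_dilation_vectors_eq_range (hS : IsPosNegClosed S) {V : G → K →L[𝕜] K}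
    {ι : K →L[𝕜] L} {U : G → L →L[𝕜] L} (hU : IsUnitarySemigroup fun s : S => U s)
    (hUι : ∀ s ∈ S, ∀ k, U s (ι k) = ι (V s k)) :
    {x : L | ∃ a ∈ S, ∃ b ∈ S, ∃ k : K, x = adjoint (U (a - b)⁻) (U (a - b)⁺ (ι k))} =
      Set.range fun p : S × K => adjoint (U p.1) (ι p.2) := by
  have hvec {a b : G} (ha : a ∈ S) (hb : b ∈ S) (k : K) :
      adjoint (U (a - b)⁻) (U (a - b)⁺ (ι k)) = adjoint (U b) (ι (V a k)) := by
    rw [← hUι a ha]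
    exact DFunLike.congr_fun
      (hU.isIsometricSemigroup.adjoint_negPart_comp_posPart hS ha hb) (ι k)
  ext x
  constructor
  · rintro ⟨a, ha, b, hb, k, rfl⟩
    exact ⟨(⟨b, hb⟩, V a k), (hvec ha hb k).symm⟩
  · rintro ⟨⟨⟨b, hb⟩, k⟩, rfl⟩
    refine ⟨0, S.zero_mem, b, hb, k, ?_⟩
    have hU0 : U 0 = 1 := hU.map_zero
    rw [hvec S.zero_mem hb, ← hUι 0 S.zero_mem, hU0, one_def, id_apply]

theorem isMinimalRegularUnitaryDilation_iff_isMinimalUnitaryExtension [CompleteSpace K]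
    (hS : IsPosNegClosed S) {V : G → K →L[𝕜] K} (hV : IsIsometricSemigroup fun s : S => V s)
    {ι : K →L[𝕜] L} {U : G → L →L[𝕜] L} :
    IsMinimalRegularUnitaryDilation S V ι U ↔
      IsMinimalUnitaryExtension (fun s : S => V s) ι (fun s : S => U s) := by
  constructor
  · intro h
    have hU := h.isUnitarySemigroup
    have hcompression (s : S) : adjoint ι ∘L U s ∘L ι = V s := by
      have hU0 : U 0 = 1 := hU.map_zero
      have hV0 : V 0 = 1 := hV.map_zero
      have hs := h.compression_eq s s.2 0 S.zero_mem
      rwa [hU.isIsometricSemigroup.adjoint_negPart_comp_posPart hS s.2 S.zero_mem,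
        hV.adjoint_negPart_comp_posPart hS s.2 S.zero_mem, hU0, hV0, one_def, one_def,
        adjoint_id, adjoint_id, id_comp, id_comp] at hs
    have hUι (s : S) : ∀ k, U s (ι k) = ι (V s k) :=
      apply_embed_eq_of_compression_eq h.norm_embed (hV.norm_map s)
        (fun x => (hU.isIsometricSemigroup.norm_map s x).le) (hcompression s)
    refine ⟨h.norm_embed, hU, hUι, ?_⟩
    rw [Submodule.dense_iff_topologicalClosure_eq_top,
      ← setOf_regular_dilation_vectors_eq_range hS hU fun s hs => hUι ⟨s, hs⟩]
    exact h.topologicalClosure_span_eq_top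
  · intro h
    refine ⟨h.norm_embed, h.isUnitarySemigroup, fun a ha b hb => ?_, ?_⟩
    · obtain ⟨hp, hn⟩ := hS a ha b hb
      refine ContinuousLinearMap.ext fun k => ext_inner_right 𝕜 fun l => ?_
      simp only [comp_apply, adjoint_inner_left]
      rw [h.apply_embed ⟨_, hp⟩, h.apply_embed ⟨_, hn⟩, h.inner_embed]
    · rw [setOf_regular_dilation_vectors_eq_range hS h.isUnitarySemigroup fun s hs =>
        h.apply_embed ⟨s, hs⟩, ← Submodule.dense_iff_topologicalClosure_eq_top]
      exact h.dense_span

theorem isometric_semigroup_has_unique_minimal_regular_unitary_dilation_general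
    {𝕜 : Type u} {G : Type v} {K : Type w} [RCLike 𝕜] [AddCommGroup G] [Lattice G]
    [AddLeftMono G] [NormedAddCommGroup K] [InnerProductSpace 𝕜 K] [CompleteSpace K]
    {S : AddSubmonoid G} (hS : IsPosNegClosed S) {V : G → K →L[𝕜] K}
    (hV : IsIsometricSemigroup fun s : S => V s) :
    ∃ (L : Type (max u v w)) (_ : NormedAddCommGroup L) (_ : InnerProductSpace 𝕜 L)
      (_ : CompleteSpace L) (ι : K →L[𝕜] L) (U : G → L →L[𝕜] L),
      IsMinimalRegularUnitaryDilation S V ι U ∧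
      ∀ (L' : Type x) (_ : NormedAddCommGroup L') (_ : InnerProductSpace 𝕜 L')
        (_ : CompleteSpace L') (ι' : K →L[𝕜] L') (U' : G → L' →L[𝕜] L'),
        IsMinimalRegularUnitaryDilation S V ι' U' →
        ∃ W : L ≃ₗᵢ[𝕜] L', (∀ k, W (ι k) = ι' k) ∧ ∀ s ∈ S, ∀ x, W (U s x) = U' s (W x) := by
  obtain ⟨L, _, _, _, ι, U₀, h₀⟩ := hV.exists_isMinimalUnitaryExtension
  let U : G → L →L[𝕜] L := Function.extend Subtype.val U₀ 1
  have hU : (fun s : S => U s) = U₀ := Function.extend_comp Subtype.val_injective U₀ 1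
  rw [← hU] at h₀
  refine ⟨L, inferInstance, inferInstance, inferInstance, ι, U,
    (isMinimalRegularUnitaryDilation_iff_isMinimalUnitaryExtension hS hV).mpr h₀, ?_⟩
  intro L' _ _ _ ι' U' h'
  obtain ⟨W, hWι, hWU⟩ := h₀.exists_linearIsometryEquiv
    ((isMinimalRegularUnitaryDilation_iff_isMinimalUnitaryExtension hS hV).mp h')
  exact ⟨W, hWι, fun s hs => hWU ⟨s, hs⟩⟩

end RegularDilation

theorem posPart'_eq_posPart {Ω : Type*} (s : Ω → ℝ) : posPart' s = s⁺ :=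
  rfl

theorem negPart'_eq_negPart {Ω : Type*} (s : Ω → ℝ) : negPart' s = s⁻ := by
  rw [negPart', posPart'_eq_posPart, sub_eq_iff_eq_add', ← sub_eq_iff_eq_add, posPart_sub_negPart]

/-- **Minimal regular unitary dilation of a semigroup of isometries.**
Let `Sig` be a `+,-`-closed unital subsemigroup of `ℝ₊^Ω` and `V` a semigroup of
isometries over `Sig` on a complex Hilbert space `K`.  Then `V` admits a minimal
regular unitary dilation `U` on a Hilbert space `L ⊇ K`, unique up to a unitary
equivalence fixing `K`. -/
theorem isometric_semigroup_has_unique_minimal_regular_unitary_dilation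
    {Ω : Type} {K : Type} [NormedAddCommGroup K] [InnerProductSpace ℂ K]
    [CompleteSpace K]
    (Sig : Set (Ω → ℝ))
    (hnn : ∀ s ∈ Sig, ∀ j : Ω, 0 ≤ s j)
    (h0 : (0 : Ω → ℝ) ∈ Sig)
    (hadd : ∀ a ∈ Sig, ∀ b ∈ Sig, a + b ∈ Sig)
    (hpm : ∀ a ∈ Sig, ∀ b ∈ Sig, posPart' (a - b) ∈ Sig ∧ negPart' (a - b) ∈ Sig)
    (V : (Ω → ℝ) → K →L[ℂ] K)
    (hV0 : V 0 = 1)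
    (hVsg : ∀ a ∈ Sig, ∀ b ∈ Sig, V (a + b) = V a ∘L V b)
    (hViso : ∀ s ∈ Sig, ∀ x : K, ‖V s x‖ = ‖x‖) :
    ∃ (L : Type) (_ : NormedAddCommGroup L) (_ : InnerProductSpace ℂ L)
      (_ : CompleteSpace L) (ι : K →L[ℂ] L) (U : (Ω → ℝ) → L →L[ℂ] L),
      -- `ι` is an isometric embedding of `K` into `L`
      (∀ x : K, ‖ι x‖ = ‖x‖) ∧
      -- `U` is a semigroup over `Sig`
      U 0 = 1 ∧
      (∀ a ∈ Sig, ∀ b ∈ Sig, U (a + b) = U a ∘L U b) ∧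
      -- consisting of unitaries
      (∀ s ∈ Sig, U s ∘L adjoint (U s) = 1 ∧ adjoint (U s) ∘L U s = 1) ∧
      -- regular dilation: for `s = a - b ∈ Sig - Sig`, `P_K U_{s₋}* U_{s₊}|_K = V_{s₋}* V_{s₊}`
      (∀ a ∈ Sig, ∀ b ∈ Sig,
        adjoint ι ∘L (adjoint (U (negPart' (a - b))) ∘L U (posPart' (a - b))) ∘L ι
          = adjoint (V (negPart' (a - b))) ∘L V (posPart' (a - b))) ∧
      -- minimality: `L = ⋁_{s ∈ Sig - Sig} U_{s₋}* U_{s₊} K`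
      (Submodule.span ℂ {x : L | ∃ a ∈ Sig, ∃ b ∈ Sig, ∃ k : K,
          x = adjoint (U (negPart' (a - b)))
                (U (posPart' (a - b)) (ι k))}).topologicalClosure = ⊤ ∧
      -- uniqueness up to a unitary equivalence fixing `K`
      (∀ (L' : Type) (_ : NormedAddCommGroup L') (_ : InnerProductSpace ℂ L')
          (_ : CompleteSpace L') (ι' : K →L[ℂ] L') (U' : (Ω → ℝ) → L' →L[ℂ] L'),
        (∀ x : K, ‖ι' x‖ = ‖x‖) →
        U' 0 = 1 →
        (∀ a ∈ Sig, ∀ b ∈ Sig, U' (a + b) = U' a ∘L U' b) →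
        (∀ s ∈ Sig, U' s ∘L adjoint (U' s) = 1 ∧ adjoint (U' s) ∘L U' s = 1) →
        (∀ a ∈ Sig, ∀ b ∈ Sig,
          adjoint ι' ∘L (adjoint (U' (negPart' (a - b))) ∘L U' (posPart' (a - b))) ∘L ι'
            = adjoint (V (negPart' (a - b))) ∘L V (posPart' (a - b))) →
        (Submodule.span ℂ {x : L' | ∃ a ∈ Sig, ∃ b ∈ Sig, ∃ k : K,
            x = adjoint (U' (negPart' (a - b)))
                  (U' (posPart' (a - b)) (ι' k))}).topologicalClosure = ⊤ →
        ∃ W : L ≃ₗᵢ[ℂ] L',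
          (∀ k : K, W (ι k) = ι' k) ∧ ∀ s ∈ Sig, ∀ x : L, W (U s x) = U' s (W x)) := by
  simp only [posPart'_eq_posPart, negPart'_eq_negPart] at hpm ⊢
  let S : AddSubmonoid (Ω → ℝ) :=
    { carrier := Sig, zero_mem' := h0, add_mem' := fun ha hb => hadd _ ha _ hb }
  obtain ⟨L, _, _, _, ι, U, h, hunique⟩ :=
    isometric_semigroup_has_unique_minimal_regular_unitary_dilation_general (S := S) hpm
      ⟨hV0, fun a b => hVsg a a.2 b b.2, fun s => hViso s s.2⟩
  have hU := h.isUnitarySemigroup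
  refine ⟨L, inferInstance, inferInstance, inferInstance, ι, U, h.norm_embed, hU.map_zero,
    fun a ha b hb => hU.map_add ⟨a, ha⟩ ⟨b, hb⟩, fun s hs => (hU.mem_unitary ⟨s, hs⟩).symm,
    h.compression_eq, h.topologicalClosure_span_eq_top, ?_⟩
  intro L' _ _ _ ι' U' hι' hU'0 hU'add hU' hcompression hmin
  exact hunique L' _ _ _ ι' U' ⟨hι', ⟨hU'0, fun a b => hU'add a a.2 b b.2,
    fun s => (hU' s s.2).symm⟩, hcompression, hmin⟩
end
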